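/- Let d ≥ 1 and let Φ be a complex-valued Schwartz function on ℝ^d with ∫_{ℝ^d} Φ = 0 which is nondegenerate, i.e. for every ξ ∈ ℝ^d \ {0} there exists ε > 0 with Φ̂(εξ) ≠ 0. There is a constant C depending only on d and Φ with the following property. Let N ≥ 0 and let f : ℝ^d → ℂ be measurable with ∫_{ℝ^d} |f(t)|²/(1+|t|)^{d+1} dt < ∞ and such that for every ball B ⊂ ℝ^d of radius r: ∫_B ∫_0^r |Φ_ε * f(s)|² (dε/ε) ds ≤ N² |B|. Then for every ball B ⊂ ℝ^d, (1/|B|) ∫_B |f(t) − f_B|² dt ≤ C N², where f_B = (1/|B|)∫_B f. -/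

import Mathlib

open MeasureTheory Real FourierTransform Complex

noncomputable section

/-- `ℝ^d`. -/
abbrev Ed (d : ℕ) := EuclideanSpace ℝ (Fin d)

/-- Dilation `Φ_ε(s) = ε^{-d} Φ(s/ε)`. -/
def dil (d : ℕ) (Φ : Ed d → ℂ) (ε : ℝ) (s : Ed d) : ℂ :=
  ((ε : ℂ) ^ d)⁻¹ * Φ (ε⁻¹ • s)

/-- Convolution `g * f (s) = ∫ g(s-t) f(t) dt`. -/
def cnv (d : ℕ) (g f : Ed d → ℂ) (s : Ed d) : ℂ :=
  ∫ t, g (s - t) * f t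

/-- Mean of `f` over the ball of center `z` and radius `r`. -/
def avgB (d : ℕ) (f : Ed d → ℂ) (z : Ed d) (r : ℝ) : ℂ :=
  (volume (Metric.ball z r)).toReal⁻¹ • ∫ t in Metric.ball z r, f t

lemma sch_decay {d : ℕ} (Θ : SchwartzMap (Ed d) ℂ) (M : ℕ) :
    ∃ C : ℝ, 0 < C ∧ ∀ x, ‖Θ x‖ * (1 + ‖x‖) ^ M ≤ C := by
  have h := fun x => SchwartzMap.one_add_le_sup_seminorm_apply (𝕜 := ℝ) (m := (M, 0))
    (k := M) (n := 0) le_rfl le_rfl Θ x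
  refine ⟨2 ^ M * ((Finset.Iic (M, 0)).sup
    (fun m => SchwartzMap.seminorm ℝ (F := ℂ) (E := Ed d) m.1 m.2)) Θ + 1, by positivity,
    fun x => ?_⟩
  have := h x
  rw [norm_iteratedFDeriv_zero, mul_comm] at this
  exact this.trans (le_add_of_nonneg_right zero_le_one)

lemma sch_decay_fderiv {d : ℕ} (Θ : SchwartzMap (Ed d) ℂ) (M : ℕ) :
    ∃ C : ℝ, 0 < C ∧ ∀ x, ‖fderiv ℝ Θ x‖ * (1 + ‖x‖) ^ M ≤ C := by
  have h := fun x => SchwartzMap.one_add_le_sup_seminorm_apply (𝕜 := ℝ) (m := (M, 1))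
    (k := M) (n := 1) le_rfl le_rfl Θ x
  refine ⟨2 ^ M * ((Finset.Iic (M, 1)).sup
    (fun m => SchwartzMap.seminorm ℝ (F := ℂ) (E := Ed d) m.1 m.2)) Θ + 1, by positivity,
    fun x => ?_⟩
  have := h x
  rw [norm_iteratedFDeriv_one, mul_comm] at this
  exact this.trans (le_add_of_nonneg_right zero_le_one)

lemma sch_diff {d : ℕ} (Θ : SchwartzMap (Ed d) ℂ) (M : ℕ) :
    ∃ C : ℝ, 0 < C ∧ ∀ a b, ‖b - a‖ ≤ (1 + ‖a‖) / 2 →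
      ‖Θ b - Θ a‖ * (1 + ‖a‖) ^ M ≤ C * ‖b - a‖ := by
  obtain ⟨C, hC, h⟩ := sch_decay_fderiv Θ M
  refine ⟨C * 2 ^ M, by positivity, fun a b hab => ?_⟩
  have key : ‖Θ b - Θ a‖ ≤ (C * 2 ^ M / (1 + ‖a‖) ^ M) * ‖b - a‖ := by
    refine (convex_segment a b).norm_image_sub_le_of_norm_fderiv_le (𝕜 := ℝ)
      (fun x _ => Θ.differentiable.differentiableAt) (fun x hx => ?_)
      (left_mem_segment ℝ a b) (right_mem_segment ℝ a b)
    have h1 : ‖x - a‖ ≤ ‖b - a‖ := by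
      obtain ⟨t, ht, rfl⟩ := (segment_eq_image' ℝ a b) ▸ hx
      simp only [add_sub_cancel_left, norm_smul, Real.norm_eq_abs, abs_of_nonneg ht.1]
      exact mul_le_of_le_one_left (norm_nonneg _) ht.2
    have h2 : (1 + ‖a‖) / 2 ≤ 1 + ‖x‖ := by
      have : ‖a‖ ≤ ‖x‖ + ‖x - a‖ := by
        have := norm_sub_le x (x - a); simpa using this
      linarith
    have h3 : ((1 + ‖a‖) / 2) ^ M ≤ (1 + ‖x‖) ^ M := by gcongr
    rw [le_div_iff₀ (by positivity)]
    rw [div_pow, div_le_iff₀ (by positivity)] at h3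
    calc ‖fderiv ℝ Θ x‖ * (1 + ‖a‖) ^ M ≤ ‖fderiv ℝ Θ x‖ * ((1 + ‖x‖) ^ M * 2 ^ M) := by gcongr
      _ = (‖fderiv ℝ Θ x‖ * (1 + ‖x‖) ^ M) * 2 ^ M := by ring
      _ ≤ _ := by gcongr; exact h x
  calc _ ≤ (C * 2 ^ M / (1 + ‖a‖) ^ M) * ‖b - a‖ * (1 + ‖a‖) ^ M := by gcongr
    _ = _ := by field_simp

lemma norm_dil {d : ℕ} (Φ : Ed d → ℂ) {ε : ℝ} (hε : 0 < ε) (x : Ed d) :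
    ‖dil d Φ ε x‖ = (ε ^ d)⁻¹ * ‖Φ (ε⁻¹ • x)‖ := by
  simp [dil, abs_of_pos hε]

lemma one_add_inv_smul {d : ℕ} {ε : ℝ} (hε : 0 < ε) (x : Ed d) :
    1 + ‖ε⁻¹ • x‖ = (ε + ‖x‖) / ε := by
  rw [norm_smul, norm_inv, Real.norm_eq_abs, abs_of_pos hε]; field_simp

lemma dil_bound {d : ℕ} (Θ : SchwartzMap (Ed d) ℂ) (j : ℕ) :
    ∃ C : ℝ, 0 < C ∧ ∀ (ε : ℝ) (x : Ed d), 0 < ε →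
      ‖dil d Θ ε x‖ ≤ C * ε ^ j / (ε + ‖x‖) ^ (d + j) := by
  obtain ⟨C, hC, h⟩ := sch_decay Θ (d + j)
  refine ⟨C, hC, fun ε x hε => ?_⟩
  have := h (ε⁻¹ • x)
  rw [one_add_inv_smul hε, div_pow, ← mul_div_assoc, div_le_iff₀ (by positivity)] at this
  rw [norm_dil _ hε, le_div_iff₀ (by positivity), mul_assoc, inv_mul_le_iff₀ (by positivity)]
  calc _ ≤ _ := this
    _ = _ := by ring

lemma dil_diff {d : ℕ} (Θ : SchwartzMap (Ed d) ℂ) (j : ℕ) :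
    ∃ C : ℝ, 0 < C ∧ ∀ (ε : ℝ) (s u : Ed d), 0 < ε → ‖u‖ ≤ 1 → 2 ≤ ε + ‖s‖ →
      ‖dil d Θ ε (u - s) - dil d Θ ε (-s)‖ ≤ C * ε ^ j / (ε + ‖s‖) ^ (d + 1 + j) := by
  obtain ⟨C, hC, h⟩ := sch_diff Θ (d + 1 + j)
  refine ⟨C, hC, fun ε s u hε hu hs => ?_⟩
  have e1 : ‖ε⁻¹ • (u - s) - ε⁻¹ • (-s)‖ = ‖u‖ / ε := by
    rw [← smul_sub, norm_smul, norm_inv, Real.norm_eq_abs, abs_of_pos hε]; simp; field_simp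
  have e2 : 1 + ‖ε⁻¹ • (-s)‖ = (ε + ‖s‖) / ε := by rw [one_add_inv_smul hε, norm_neg]
  have := h (ε⁻¹ • (-s)) (ε⁻¹ • (u - s)) (by
    rw [e1, e2, div_div, mul_comm ε 2, ← div_div, div_le_div_iff_of_pos_right hε]; linarith)
  rw [e1, e2, div_pow, ← mul_div_assoc, div_le_iff₀ (by positivity)] at this
  have e3 : ‖dil d Θ ε (u - s) - dil d Θ ε (-s)‖
      = (ε ^ d)⁻¹ * ‖Θ (ε⁻¹ • (u - s)) - Θ (ε⁻¹ • (-s))‖ := by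
    simp [dil, ← mul_sub, abs_of_pos hε]
  rw [e3, le_div_iff₀ (by positivity), mul_assoc, inv_mul_le_iff₀ (by positivity)]
  calc _ ≤ _ := this
    _ ≤ C * (1 / ε) * ε ^ (d + 1 + j) := by gcongr
    _ = _ := by rw [pow_add, pow_add]; field_simp

/-- the weight function -/
def wt {d : ℕ} (t : Ed d) : ℝ := ((1 + ‖t‖) ^ (d + 1))⁻¹

lemma wt_pos {d : ℕ} (t : Ed d) : 0 < wt t := by unfold wt; positivity

lemma integrable_wt {d : ℕ} : Integrable (fun t : Ed d => wt t) := by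
  have := integrable_one_add_norm (E := Ed d) (μ := volume) (r := d + 1) (by simp)
  refine this.congr (Filter.Eventually.of_forall fun x => ?_)
  simp only [wt]
  rw [Real.rpow_neg (by positivity)]
  norm_cast

lemma continuous_wt {d : ℕ} : Continuous (fun t : Ed d => wt t) := by
  unfold wt
  exact Continuous.inv₀ (by fun_prop) (fun x => by positivity)

/-- `f` is in the admissible class -/
structure Adm {d : ℕ} (f : Ed d → ℂ) : Prop where
  meas : Measurable f
  int : Integrable (fun t : Ed d => ‖f t‖ ^ 2 / (1 + ‖t‖) ^ (d + 1)) volume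

lemma Adm.int1 {d : ℕ} {f : Ed d → ℂ} (hf : Adm f) : Integrable (fun t => ‖f t‖ * wt t) := by
  refine (hf.int.add integrable_wt).mono'
    ((hf.meas.norm.mul continuous_wt.measurable).aestronglyMeasurable)
    (Filter.Eventually.of_forall fun t => ?_)
  have := wt_pos t
  rw [Real.norm_of_nonneg (by positivity)]
  simp only [Pi.add_apply, div_eq_mul_inv]
  change _ ≤ ‖f t‖ ^ 2 * wt t + wt t
  nlinarith [sq_nonneg (‖f t‖ - 1 / 2)]

lemma Adm.memLp_ball {d : ℕ} {f : Ed d → ℂ} (hf : Adm f) (R : ℝ) :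
    MemLp (Set.indicator (Metric.ball 0 R) f) 2 := by
  rw [memLp_two_iff_integrable_sq_norm
    (hf.meas.indicator measurableSet_ball).aestronglyMeasurable]
  refine (hf.int.const_mul ((1 + |R|) ^ (d + 1))).mono'
    ((hf.meas.indicator measurableSet_ball).norm.pow_const 2).aestronglyMeasurable
    (Filter.Eventually.of_forall fun t => ?_)
  rw [Real.norm_of_nonneg (by positivity)]
  by_cases ht : t ∈ Metric.ball (0 : Ed d) R
  · rw [Set.indicator_of_mem ht]
    rw [mem_ball_zero_iff] at ht
    rw [← mul_div_assoc, le_div_iff₀ (by positivity), mul_comm]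
    have : 1 + ‖t‖ ≤ 1 + |R| := by linarith [le_abs_self R]
    gcongr
  · rw [Set.indicator_of_notMem ht]
    simp; positivity

lemma integrable_of_memLp_ball {d : ℕ} {h : Ed d → ℂ} {R : ℝ}
    (h2 : MemLp h 2) (hs : ∀ x, x ∉ Metric.ball (0 : Ed d) R → h x = 0) : Integrable h := by
  have : Set.indicator (Metric.ball (0 : Ed d) R) h = h := by
    ext x
    by_cases hx : x ∈ Metric.ball (0 : Ed d) R
    · rw [Set.indicator_of_mem hx]
    · rw [Set.indicator_of_notMem hx, hs x hx]
  rw [← this, integrable_indicator_iff measurableSet_ball]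
  have : IsFiniteMeasure ((volume : Measure (Ed d)).restrict (Metric.ball 0 R)) :=
    ⟨by simp [measure_ball_lt_top]⟩
  exact (h2.restrict _).integrable (by norm_num)

lemma fourier_Lp_ae {d : ℕ} {h : Ed d → ℂ} (h1 : Integrable h) (h2 : MemLp h 2) :
    (𝓕 (h2.toLp h) : Lp ℂ 2 (volume : Measure (Ed d))) =ᵐ[volume] 𝓕 h := by
  have hc : Continuous (𝓕 h) :=
    VectorFourier.fourierIntegral_continuous Real.continuous_fourierChar
      (by exact continuous_inner) h1
  refine ae_eq_of_integral_contDiff_smul_eq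
    ((Lp.memLp _).locallyIntegrable (by norm_num)) hc.locallyIntegrable ?_
  intro g hg hgs
  have hgs' : HasCompactSupport (fun x => (g x : ℂ)) :=
    hgs.comp_left (g := fun x : ℝ => (x : ℂ)) (by simp)
  have hg' : ContDiff ℝ ((⊤ : ℕ∞) : WithTop ℕ∞) (fun x => (g x : ℂ)) :=
    Complex.ofRealCLM.contDiff.comp hg
  set G : SchwartzMap (Ed d) ℂ := hgs'.toSchwartzMap hg' with hG
  have hGa : ∀ x, G x = (g x : ℂ) := fun x => rfl
  have e1 := congrArg (fun T => T G) (Lp.fourier_toTemperedDistribution_eq (h2.toLp h))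
  simp only [Lp.toTemperedDistribution_apply, TemperedDistribution.fourier_apply] at e1
  calc _ = ∫ x, G x • (𝓕 (h2.toLp h) : Lp ℂ 2 (volume : Measure (Ed d))) x := by simp [hGa]
    _ = ∫ x, (𝓕 G) x • (h2.toLp h) x := e1.symm
    _ = ∫ x, (𝓕 (fun x => G x)) x • h x := by
      refine integral_congr_ae ?_
      filter_upwards [h2.coeFn_toLp] with x hx
      rw [hx]; rfl
    _ = ∫ x, G x • 𝓕 h x := by
      have := VectorFourier.integral_fourierIntegral_smul_eq_flip (e := Real.fourierChar)
        (L := innerₗ (Ed d)) (f := fun x => G x) (g := h) (μ := volume) (ν := volume)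
        Real.continuous_fourierChar (by exact continuous_inner) G.integrable h1
      rw [flip_innerₗ] at this
      exact this
    _ = _ := by simp [hGa]

lemma plancherel {d : ℕ} {h : Ed d → ℂ} (h1 : Integrable h) (h2 : MemLp h 2) :
    ∫⁻ ξ, ‖𝓕 h ξ‖ₑ ^ 2 = ∫⁻ x, ‖h x‖ₑ ^ 2 := by
  have e := fourier_Lp_ae h1 h2
  have n := congrArg ENNReal.ofReal (Lp.norm_fourier_eq (h2.toLp h))
  rw [ofReal_norm, ofReal_norm, Lp.enorm_def, Lp.enorm_def, eLpNorm_congr_ae e,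
    eLpNorm_congr_ae h2.coeFn_toLp] at n
  have key : ∀ k : Ed d → ℂ, eLpNorm k 2 volume ^ 2 = ∫⁻ x, ‖k x‖ₑ ^ 2 := by
    intro k
    have := eLpNorm_nnreal_pow_eq_lintegral (f := k) (μ := volume) (p := 2) (by norm_num)
    simpa using this
  rw [← key, ← key, n]

lemma integrable_dil {d : ℕ} (Θ : SchwartzMap (Ed d) ℂ) {ε : ℝ} (hε : 0 < ε) :
    Integrable (dil d Θ ε) := by
  unfold dil
  exact (Θ.integrable.comp_smul (inv_ne_zero hε.ne')).const_mul _

lemma continuous_dil {d : ℕ} (Θ : SchwartzMap (Ed d) ℂ) (ε : ℝ) :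
    Continuous (dil d Θ ε) := by
  unfold dil
  exact continuous_const.mul (Θ.continuous.comp (continuous_const_smul _))

lemma fourier_dil {d : ℕ} (Θ : SchwartzMap (Ed d) ℂ) {ε : ℝ} (hε : 0 < ε) (ξ : Ed d) :
    𝓕 (dil d Θ ε) ξ = 𝓕 (fun x => Θ x) (ε • ξ) := by
  rw [Real.fourier_eq, Real.fourier_eq]
  have := Measure.integral_comp_smul (μ := (volume : Measure (Ed d)))
    (fun v => Real.fourierChar (-inner ℝ v (ε • ξ)) • Θ v) ε⁻¹
  have hd : Module.finrank ℝ (Ed d) = d := by simp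
  rw [hd, abs_of_pos (by positivity), inv_pow, inv_inv] at this
  have e2 : ∀ v : Ed d, inner ℝ (ε⁻¹ • v) (ε • ξ) = inner ℝ v ξ := by
    intro v
    rw [real_inner_smul_left, real_inner_smul_right, ← mul_assoc, inv_mul_cancel₀ hε.ne', one_mul]
  simp_rw [e2] at this
  have e3 : ∀ v : Ed d, Real.fourierChar (-inner ℝ v ξ) • dil d Θ ε v
      = ((ε : ℂ) ^ d)⁻¹ * (Real.fourierChar (-inner ℝ v ξ) • Θ (ε⁻¹ • v)) := by
    intro v
    simp only [dil, Circle.smul_def, smul_eq_mul]; ring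
  simp_rw [e3]
  rw [integral_const_mul, this, Complex.real_smul]
  have : (ε : ℂ) ≠ 0 := by exact_mod_cast hε.ne'
  push_cast
  field_simp

lemma cnv_eq_convolution {d : ℕ} (g f : Ed d → ℂ) :
    cnv d g f = convolution g f (ContinuousLinearMap.mul ℂ ℂ) volume := by
  ext s
  rw [← convolution_flip]
  simp only [cnv, convolution_def, ContinuousLinearMap.flip_apply, ContinuousLinearMap.mul_apply']

lemma dil_bdd {d : ℕ} (Θ : SchwartzMap (Ed d) ℂ) {ε : ℝ} (hε : 0 < ε) :
    ∃ C, 0 ≤ C ∧ ∀ x, ‖dil d Θ ε x‖ ≤ C := by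
  obtain ⟨C, hC, h⟩ := sch_decay Θ 0
  refine ⟨(ε ^ d)⁻¹ * C, by positivity, fun x => ?_⟩
  rw [norm_dil _ hε]
  have := h (ε⁻¹ • x)
  simp at this
  gcongr

lemma integrable_cnv {d : ℕ} (Θ : SchwartzMap (Ed d) ℂ) {ε : ℝ} (hε : 0 < ε) {h : Ed d → ℂ}
    (h1 : Integrable h) : Integrable (cnv d (dil d Θ ε) h) := by
  rw [cnv_eq_convolution]
  exact (integrable_dil Θ hε).integrable_convolution _ h1

lemma memLp_cnv {d : ℕ} (Θ : SchwartzMap (Ed d) ℂ) {ε : ℝ} (hε : 0 < ε) {h : Ed d → ℂ}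
    (h1 : Integrable h) : MemLp (cnv d (dil d Θ ε) h) 2 := by
  have i := integrable_cnv Θ hε h1
  obtain ⟨C, hC, hb⟩ := dil_bdd Θ hε
  rw [memLp_two_iff_integrable_sq_norm i.1]
  refine (i.norm.const_mul (C * ∫ t, ‖h t‖)).mono' (i.1.norm.pow 2)
    (Filter.Eventually.of_forall fun s => ?_)
  rw [Real.norm_of_nonneg (by positivity), pow_two]
  gcongr
  unfold cnv
  rw [← integral_const_mul]
  refine norm_integral_le_of_norm_le (h1.norm.const_mul C) (Filter.Eventually.of_forall fun t => ?_)
  rw [norm_mul]; gcongr; exact hb _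

lemma plancherel_cnv {d : ℕ} (Θ : SchwartzMap (Ed d) ℂ) {ε : ℝ} (hε : 0 < ε) {h : Ed d → ℂ}
    (h1 : Integrable h) (h2 : MemLp h 2) (c : ℂ) :
    ∫⁻ s, ‖cnv d (dil d Θ ε) h s - c * h s‖ₑ ^ 2
      = ∫⁻ ξ, ‖𝓕 (fun x => Θ x) (ε • ξ) - c‖ₑ ^ 2 * ‖𝓕 h ξ‖ₑ ^ 2 := by
  have i := integrable_cnv Θ hε h1
  have := plancherel (i.sub (h1.const_mul c)) ((memLp_cnv Θ hε h1).sub (h2.const_mul c))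
  simp only [Pi.sub_apply] at this
  rw [← this]
  congr 1
  ext ξ
  rw [← mul_pow, ← enorm_mul]
  congr 2
  have e1 : 𝓕 (cnv d (dil d Θ ε) h - fun x => c * h x) ξ
      = 𝓕 (cnv d (dil d Θ ε) h) ξ - c * 𝓕 h ξ := by
    simp only [Real.fourier_eq, Pi.sub_apply, smul_sub]
    rw [integral_sub, ← integral_const_mul]
    · congr 2; ext v; simp only [Circle.smul_def, smul_eq_mul]; ring
    · exact (Real.fourierIntegral_convergent_iff ξ).2 i
    · exact (Real.fourierIntegral_convergent_iff ξ).2 (h1.const_mul c)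
  rw [e1, cnv_eq_convolution, Real.fourier_mul_convolution_eq (integrable_dil Θ hε) h1,
    fourier_dil Θ hε]
  ring

/-- measure on the upper half space -/
def nu (d : ℕ) : Measure (ℝ × Ed d) := (volume.restrict (Set.Ioi (0 : ℝ))).prod volume

lemma measurable_dil2 {d : ℕ} (Θ : SchwartzMap (Ed d) ℂ) :
    Measurable (fun p : ℝ × Ed d => dil d Θ p.1 p.2) := by
  unfold dil
  have : Measurable (fun p : ℝ × Ed d => Θ (p.1⁻¹ • p.2)) :=
    Θ.continuous.measurable.comp (measurable_fst.inv.smul measurable_snd)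
  exact ((Complex.measurable_ofReal.comp measurable_fst).pow_const d).inv.mul this

lemma measurable_cnv {d : ℕ} (Θ : SchwartzMap (Ed d) ℂ) {f : Ed d → ℂ} (hf : Measurable f) :
    Measurable (fun p : ℝ × Ed d => cnv d (dil d Θ p.1) f p.2) := by
  unfold cnv
  refine StronglyMeasurable.measurable ?_
  have : StronglyMeasurable (fun q : (ℝ × Ed d) × Ed d => dil d Θ q.1.1 (q.1.2 - q.2) * f q.2) := by
    refine Measurable.stronglyMeasurable ?_
    refine Measurable.mul ?_ (hf.comp measurable_snd)
    exact (measurable_dil2 Θ).comp (measurable_fst.fst.prodMk (measurable_fst.snd.sub measurable_snd))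
  exact this.integral_prod_right

lemma fourier_min_bound {d : ℕ} (Θ : SchwartzMap (Ed d) ℂ) (h0 : 𝓕 (fun x => Θ x) 0 = 0) :
    ∃ C : ℝ, 0 < C ∧ ∀ η, ‖𝓕 (fun x => Θ x) η‖ * (1 + ‖η‖ ^ 2) ≤ C * ‖η‖ := by
  set T : SchwartzMap (Ed d) ℂ := 𝓕 Θ with hT
  have hTa : ∀ η, 𝓕 (fun x => Θ x) η = T η := fun η => rfl
  obtain ⟨C1, hC1, h1⟩ := sch_decay T 2
  obtain ⟨C2, hC2, h2⟩ := sch_diff T 0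
  refine ⟨C1 + 2 * C2 + C1, by positivity, fun η => ?_⟩
  rw [hTa] at h0 ⊢
  have a1 := h1 η
  have n0 := norm_nonneg η
  have n1 := norm_nonneg (T η)
  by_cases hη : ‖η‖ ≤ 1 / 2
  · have a2 := h2 0 η (by simpa using hη)
    simp [h0] at a2
    have : ‖η‖ ^ 2 ≤ 1 := by nlinarith
    nlinarith [mul_nonneg hC1.le n0]
  · push Not at hη
    have : ‖T η‖ * (1 + ‖η‖ ^ 2) ≤ ‖T η‖ * (1 + ‖η‖) ^ 2 := by gcongr; nlinarith
    nlinarith [mul_nonneg hC1.le n0, mul_nonneg hC2.le n0]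

lemma lint_eps {C : ℝ} (hC : 0 < C) {a : ℝ} (F : ℝ → ℝ) 
    (hF : ∀ ε, 0 < ε → 0 ≤ F ε ∧ F ε * (1 + (ε * a) ^ 2) ≤ C * (ε * a)) :
    ∫⁻ ε in Set.Ioi (0 : ℝ), ENNReal.ofReal (F ε ^ 2 * ε⁻¹) ≤ ENNReal.ofReal (C ^ 2) := by
  set g : ℝ → ℝ := fun ε => - (C ^ 2 / 2) * (1 + (ε * a) ^ 2)⁻¹
  set g' : ℝ → ℝ := fun ε => C ^ 2 * (a ^ 2 * ε) * ((1 + (ε * a) ^ 2) ^ 2)⁻¹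
  have hg : ∀ x ∈ Set.Ioi (0 : ℝ), HasDerivAt g (g' x) x := by
    intro x _
    have h1 : HasDerivAt (fun ε : ℝ => 1 + (ε * a) ^ 2) (2 * (x * a) * a) x := by
      have := (((hasDerivAt_id x).mul_const a).pow 2).const_add 1
      simpa using this
    have := (h1.inv (by positivity)).const_mul (-(C ^ 2 / 2))
    convert! this using 1
    simp only [g']; field_simp
  have hpos : ∀ x ∈ Set.Ioi (0 : ℝ), 0 ≤ g' x := by
    intro x hx
    have : (0 : ℝ) < x := hx
    simp only [g']; positivity
  have hcont : Continuous g := by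
    simp only [g]
    refine continuous_const.mul (Continuous.inv₀ (by fun_prop) (fun x => by positivity))
  have hle : ∀ x, g x ≤ 0 := by
    intro x; simp only [g]
    have : 0 ≤ (C ^ 2 / 2) * (1 + (x * a) ^ 2)⁻¹ := by positivity
    linarith
  obtain ⟨l, hl⟩ : ∃ l, Filter.Tendsto g Filter.atTop (nhds l) := by
    rcases eq_or_ne a 0 with ha | ha
    · exact ⟨-(C ^ 2 / 2), by simp [g, ha]⟩
    · refine ⟨-(C ^ 2 / 2) * 0, Filter.Tendsto.const_mul _ (Filter.Tendsto.inv_tendsto_atTop ?_)⟩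
      refine Filter.tendsto_atTop_add_const_left _ _ ?_
      simp_rw [mul_pow]
      exact (Filter.tendsto_pow_atTop two_ne_zero).atTop_mul_const (by positivity)
  have h_integ := integrableOn_Ioi_deriv_of_nonneg hcont.continuousWithinAt hg hpos hl
  have hval := integral_Ioi_of_hasDerivAt_of_nonneg hcont.continuousWithinAt hg hpos hl
  have hl0 : l ≤ 0 := le_of_tendsto' hl hle
  calc _ ≤ ∫⁻ ε in Set.Ioi (0 : ℝ), ENNReal.ofReal (g' ε) := by
        refine setLIntegral_mono' measurableSet_Ioi fun ε hε => ENNReal.ofReal_le_ofReal ?_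
        have hε' : (0 : ℝ) < ε := hε
        obtain ⟨b1, b2⟩ := hF ε hε'
        have b3 : F ε ≤ C * (ε * a) / (1 + (ε * a) ^ 2) := by
          rw [le_div_iff₀ (by positivity)]; exact b2
        calc F ε ^ 2 * ε⁻¹ ≤ (C * (ε * a) / (1 + (ε * a) ^ 2)) ^ 2 * ε⁻¹ := by gcongr
          _ = g' ε := by simp only [g']; field_simp
    _ = ENNReal.ofReal (∫ ε in Set.Ioi (0 : ℝ), g' ε) := by
        rw [ofReal_integral_eq_lintegral_ofReal h_integ]
        exact (ae_restrict_iff' measurableSet_Ioi).2 (Filter.Eventually.of_forall hpos)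
    _ ≤ _ := by
        rw [hval]
        refine ENNReal.ofReal_le_ofReal ?_
        simp only [g]
        norm_num
        nlinarith

lemma continuous_fourier {d : ℕ} {h : Ed d → ℂ} (h1 : Integrable h) : Continuous (𝓕 h) :=
  VectorFourier.fourierIntegral_continuous Real.continuous_fourierChar
      (by exact continuous_inner) h1

lemma square_fn {d : ℕ} (Θ : SchwartzMap (Ed d) ℂ) (h0 : 𝓕 (fun x => Θ x) 0 = 0) :
    ∃ C : ℝ, 0 < C ∧ ∀ h : Ed d → ℂ, Measurable h → Integrable h → MemLp h 2 →
      ∫⁻ p, ‖cnv d (dil d Θ p.1) h p.2‖ₑ ^ 2 * ENNReal.ofReal p.1⁻¹ ∂(nu d)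
        ≤ ENNReal.ofReal C * ∫⁻ x, ‖h x‖ₑ ^ 2 := by
  obtain ⟨C, hC, hb⟩ := fourier_min_bound Θ h0
  refine ⟨C ^ 2, by positivity, fun h hm h1 h2 => ?_⟩
  unfold nu
  have cT : Continuous (𝓕 (fun x => Θ x)) := continuous_fourier Θ.integrable
  have ch : Continuous (𝓕 h) := continuous_fourier h1
  rw [lintegral_prod _ (by
    exact (((measurable_cnv Θ hm).enorm.pow_const 2).mul
      (ENNReal.measurable_ofReal.comp measurable_fst.inv)).aemeasurable)]
  calc _ = ∫⁻ ε in Set.Ioi (0 : ℝ), ∫⁻ ξ, ‖𝓕 (fun x => Θ x) (ε • ξ)‖ₑ ^ 2 * ‖𝓕 h ξ‖ₑ ^ 2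
          * ENNReal.ofReal ε⁻¹ := by
        refine setLIntegral_congr_fun measurableSet_Ioi fun ε hε => ?_
        have := plancherel_cnv Θ hε h1 h2 0
        simp only [zero_mul, sub_zero] at this
        simp only
        rw [lintegral_mul_const' _ _ ENNReal.ofReal_ne_top, this,
          lintegral_mul_const' _ _ ENNReal.ofReal_ne_top]
    _ = ∫⁻ ξ, ∫⁻ ε in Set.Ioi (0 : ℝ), ‖𝓕 (fun x => Θ x) (ε • ξ)‖ₑ ^ 2 * ‖𝓕 h ξ‖ₑ ^ 2
          * ENNReal.ofReal ε⁻¹ := by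
        have m1 : Measurable (fun q : ℝ × Ed d => ‖𝓕 (fun x => Θ x) (q.1 • q.2)‖ₑ ^ 2) :=
          (cT.measurable.comp (measurable_fst.smul measurable_snd)).enorm.pow_const 2
        have m2 : Measurable (fun q : ℝ × Ed d => ‖𝓕 h q.2‖ₑ ^ 2) :=
          (ch.measurable.comp measurable_snd).enorm.pow_const 2
        have m3 : Measurable (fun q : ℝ × Ed d => ENNReal.ofReal q.1⁻¹) :=
          (ENNReal.measurable_ofReal.comp measurable_fst.inv)
        exact lintegral_lintegral_swap ((m1.mul m2).mul m3).aemeasurable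
    _ ≤ ∫⁻ ξ, ENNReal.ofReal (C ^ 2) * ‖𝓕 h ξ‖ₑ ^ 2 := by
        refine lintegral_mono fun ξ => ?_
        have hfin : ‖𝓕 h ξ‖ₑ ^ 2 ≠ ⊤ := by simp
        calc _ = ∫⁻ ε in Set.Ioi (0 : ℝ), 
                ENNReal.ofReal (‖𝓕 (fun x => Θ x) (ε • ξ)‖ ^ 2 * ε⁻¹) * ‖𝓕 h ξ‖ₑ ^ 2 := by
              refine lintegral_congr fun ε => ?_
              rw [ENNReal.ofReal_mul (by positivity), ENNReal.ofReal_pow (by positivity), ofReal_norm]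
              ring
          _ = (∫⁻ ε in Set.Ioi (0 : ℝ), 
                ENNReal.ofReal (‖𝓕 (fun x => Θ x) (ε • ξ)‖ ^ 2 * ε⁻¹)) * ‖𝓕 h ξ‖ₑ ^ 2 := by
              rw [lintegral_mul_const' _ _ hfin]
          _ ≤ _ := by
              gcongr
              refine lint_eps hC (a := ‖ξ‖) (fun ε => ‖𝓕 (fun x => Θ x) (ε • ξ)‖) fun ε hε => ?_
              refine ⟨norm_nonneg _, ?_⟩
              have := hb (ε • ξ)
              rwa [norm_smul, Real.norm_of_nonneg hε.le] at this
    _ = _ := by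
        rw [lintegral_const_mul' _ _ ENNReal.ofReal_ne_top, plancherel h1 h2]

lemma approx_id {d : ℕ} (Θ : SchwartzMap (Ed d) ℂ) (h0 : 𝓕 (fun x => Θ x) 0 = 1)
    {h : Ed d → ℂ} (h1 : Integrable h) (h2 : MemLp h 2) :
    Filter.Tendsto (fun n : ℕ => ∫⁻ s, ‖cnv d (dil d Θ ((n : ℝ) + 1)⁻¹) h s - h s‖ₑ ^ 2)
      Filter.atTop (nhds 0) := by
  have cT : Continuous (𝓕 (fun x => Θ x)) := continuous_fourier Θ.integrable
  have ch : Continuous (𝓕 h) := continuous_fourier h1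
  have e : ∀ n : ℕ, ∫⁻ s, ‖cnv d (dil d Θ ((n : ℝ) + 1)⁻¹) h s - h s‖ₑ ^ 2
      = ∫⁻ ξ, ‖𝓕 (fun x => Θ x) (((n : ℝ) + 1)⁻¹ • ξ) - 1‖ₑ ^ 2 * ‖𝓕 h ξ‖ₑ ^ 2 := by
    intro n
    have := plancherel_cnv Θ (ε := ((n : ℝ) + 1)⁻¹) (by positivity) h1 h2 1
    simpa only [one_mul] using this
  simp_rw [e]
  obtain ⟨C, hC, hb⟩ := sch_decay (𝓕 Θ : SchwartzMap (Ed d) ℂ) 0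
  have hb' : ∀ η, ‖𝓕 (fun x => Θ x) η - 1‖ ≤ C + 1 := by
    intro η
    have := hb η
    simp only [pow_zero, mul_one] at this
    refine (norm_sub_le _ _).trans ?_
    simp only [norm_one]
    gcongr
    exact this
  have hfin : ∫⁻ ξ, ‖𝓕 h ξ‖ₑ ^ 2 ≠ ⊤ := by
    rw [plancherel h1 h2]
    have := h2.2
    have e2 := eLpNorm_nnreal_pow_eq_lintegral (f := h) (μ := volume) (p := 2) (by norm_num)
    have e3 : eLpNorm h 2 volume ^ 2 = ∫⁻ x, ‖h x‖ₑ ^ 2 := by simpa using e2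
    rw [← e3]
    exact ENNReal.pow_ne_top this.ne
  have : (0 : ENNReal) = ∫⁻ ξ : Ed d, 0 := by simp
  rw [this]
  refine tendsto_lintegral_of_dominated_convergence
    (fun ξ => ENNReal.ofReal (C + 1) ^ 2 * ‖𝓕 h ξ‖ₑ ^ 2) ?_ ?_ ?_ ?_
  · intro n
    refine Measurable.mul ?_ (ch.measurable.enorm.pow_const 2)
    exact (((cT.comp (continuous_const_smul _)).sub continuous_const).measurable).enorm.pow_const 2
  · intro n
    refine Filter.Eventually.of_forall fun ξ => ?_
    dsimp only
    gcongr
    rw [← ofReal_norm]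
    exact ENNReal.ofReal_le_ofReal (hb' _)
  · rw [lintegral_const_mul' _ _ (by simp)]
    exact ENNReal.mul_ne_top (by simp) hfin
  · refine Filter.Eventually.of_forall fun ξ => ?_
    have l1 : Filter.Tendsto (fun n : ℕ => ((n : ℝ) + 1)⁻¹ • ξ) Filter.atTop (nhds 0) := by
      have := tendsto_one_div_add_atTop_nhds_zero_nat (𝕜 := ℝ)
      simp only [one_div] at this
      simpa using this.smul_const ξ
    have l2 : Filter.Tendsto (fun n : ℕ => 𝓕 (fun x => Θ x) (((n : ℝ) + 1)⁻¹ • ξ) - 1)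
        Filter.atTop (nhds 0) := by
      have := ((cT.tendsto 0).comp l1).sub_const 1
      rw [h0, sub_self] at this
      exact this
    have l3 := ENNReal.Tendsto.mul_const (b := ‖𝓕 h ξ‖ₑ ^ 2) (ENNReal.Tendsto.pow (n := 2) l2.enorm)
      (Or.inr (by simp))
    simpa using l3

section
open scoped ContDiff

/-- angular-radial product -/
def angRad {d : ℕ} (θ : Ed d → ℝ) (m : ℝ → ℝ) (ξ : Ed d) : ℝ := θ (‖ξ‖⁻¹ • ξ) * m ‖ξ‖

lemma angRad_smul {d : ℕ} (θ : Ed d → ℝ) (m : ℝ → ℝ) {ε : ℝ} (hε : 0 < ε) (ξ : Ed d) :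
    angRad θ m (ε • ξ) = θ (‖ξ‖⁻¹ • ξ) * m (ε * ‖ξ‖) := by
  unfold angRad
  rw [norm_smul, Real.norm_of_nonneg hε.le, smul_smul]
  congr 3
  field_simp

lemma contDiff_angRad {d : ℕ} {θ : Ed d → ℝ} {m : ℝ → ℝ} {a : ℝ} (ha : 0 < a)
    (hθ : ContDiff ℝ ∞ θ) (hm : ContDiff ℝ ∞ m) (h0 : ∀ u, u < a → m u = 0) :
    ContDiff ℝ ∞ (angRad θ m) := by
  rw [contDiff_iff_contDiffAt]
  intro ξ
  by_cases hξ : ξ = 0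
  · have : angRad θ m =ᶠ[nhds ξ] fun _ => 0 := by
      have : ∀ᶠ η in nhds ξ, ‖η‖ < a := by
        refine (continuous_norm.tendsto ξ).eventually_lt_const ?_
        simpa [hξ] using ha
      filter_upwards [this] with η hη
      simp [angRad, h0 _ hη]
    exact contDiffAt_const.congr_of_eventuallyEq this
  · have hn : ContDiffAt ℝ ∞ (fun η : Ed d => ‖η‖) ξ := contDiffAt_norm ℝ hξ
    unfold angRad
    refine ContDiffAt.mul ?_ (hm.contDiffAt.comp ξ hn)
    exact hθ.contDiffAt.comp ξ ((hn.inv (norm_ne_zero_iff.2 hξ)).smul contDiffAt_id)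

lemma angRad_eventually_zero {d : ℕ} {θ : Ed d → ℝ} {m : ℝ → ℝ} {a b : ℝ} (ha : 0 < a)
    (h0 : ∀ u, u ∉ Set.Icc a b → m u = 0) (φ : Ed d → ℂ)
    (hφ : ∀ η ∈ tsupport θ, ∀ ε ∈ Set.Icc a b, φ (ε • η) ≠ 0) {ξ : Ed d} (hξ : φ ξ = 0) :
    angRad θ m =ᶠ[nhds ξ] fun _ => 0 := by
  by_cases hab : ‖ξ‖ ∈ Set.Icc a b
  · have hpos : 0 < ‖ξ‖ := ha.trans_le hab.1
    have hξ0 : ξ ≠ 0 := norm_pos_iff.1 hpos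
    have hnot : ‖ξ‖⁻¹ • ξ ∉ tsupport θ := by
      intro hmem
      refine hφ _ hmem _ hab ?_
      rw [smul_smul, mul_inv_cancel₀ hpos.ne', one_smul, hξ]
    have hc : ContinuousAt (fun η : Ed d => ‖η‖⁻¹ • η) ξ :=
      (continuous_norm.continuousAt.inv₀ hpos.ne').smul continuousAt_id
    have := hc.eventually ((isClosed_tsupport θ).isOpen_compl.mem_nhds hnot)
    filter_upwards [this] with η hη
    simp [angRad, image_eq_zero_of_notMem_tsupport hη]
  · have := continuous_norm.continuousAt.eventually
      ((isClosed_Icc (a := a) (b := b)).isOpen_compl.mem_nhds hab)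
    filter_upwards [this] with η hη
    simp [angRad, h0 _ hη]

lemma contDiff_angRad_div {d : ℕ} {θ : Ed d → ℝ} {m : ℝ → ℝ} {a b : ℝ} (ha : 0 < a)
    (hθ : ContDiff ℝ ∞ θ) (hm : ContDiff ℝ ∞ m)
    (h0 : ∀ u, u ∉ Set.Icc a b → m u = 0) {φ : Ed d → ℂ} (hφs : ContDiff ℝ ∞ φ)
    (hφ : ∀ η ∈ tsupport θ, ∀ ε ∈ Set.Icc a b, φ (ε • η) ≠ 0) :
    ContDiff ℝ ∞ (fun ξ => (angRad θ m ξ : ℂ) / φ ξ) := by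
  have h1 : ContDiff ℝ ∞ (fun ξ => (angRad θ m ξ : ℂ)) :=
    Complex.ofRealCLM.contDiff.comp (contDiff_angRad ha hθ hm
      (fun u hu => h0 u (fun h => absurd h.1 (not_le.2 hu))))
  rw [contDiff_iff_contDiffAt]
  intro ξ
  by_cases hξ : φ ξ = 0
  · have := angRad_eventually_zero ha h0 φ hφ hξ
    refine (contDiffAt_const (c := (0 : ℂ))).congr_of_eventuallyEq ?_
    filter_upwards [this] with η hη
    simp [hη]
  · simp only [div_eq_mul_inv]
    exact h1.contDiffAt.mul (hφs.contDiffAt.inv hξ)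

/-- the cutoff: `1` for `u ≤ a`, `0` for `u ≥ b` -/
def qcut (a b u : ℝ) : ℝ := Real.smoothTransition ((b - u) / (b - a))

lemma contDiff_qcut (a b : ℝ) : ContDiff ℝ ∞ (qcut a b) := by
  unfold qcut
  exact Real.smoothTransition.contDiff.comp (by fun_prop)

lemma qcut_one {a b u : ℝ} (hab : a < b) (hu : u ≤ a) : qcut a b u = 1 :=
  Real.smoothTransition.one_of_one_le (by rw [le_div_iff₀ (by linarith)]; linarith)

lemma qcut_zero {a b u : ℝ} (hab : a < b) (hu : b ≤ u) : qcut a b u = 0 :=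
  Real.smoothTransition.zero_of_nonpos (div_nonpos_of_nonpos_of_nonneg (by linarith) (by linarith))

lemma deriv_qcut_zero {a b u : ℝ} (hab : a < b) (hu : u ∉ Set.Icc a b) :
    deriv (qcut a b) u = 0 := by
  rw [Set.mem_Icc, not_and_or, not_le, not_le] at hu
  rcases hu with hu | hu
  · have : qcut a b =ᶠ[nhds u] fun _ => 1 := by
      filter_upwards [gt_mem_nhds hu] with v hv using qcut_one hab hv.le
    rw [this.deriv_eq]; simp
  · have : qcut a b =ᶠ[nhds u] fun _ => 0 := by
      filter_upwards [lt_mem_nhds hu] with v hv using qcut_zero hab hv.le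
    rw [this.deriv_eq]; simp

lemma contDiff_uq (a b : ℝ) : ContDiff ℝ ∞ (fun u => -(u * deriv (qcut a b) u)) := by
  have : ContDiff ℝ ∞ (deriv (qcut a b)) :=
    (contDiff_infty_iff_deriv.1 (contDiff_qcut a b)).2
  exact (contDiff_id.mul this).neg

lemma exists_local {d : ℕ} {φ : Ed d → ℂ} (hφ : Continuous φ) {w : Ed d} {ε : ℝ} (hε : 0 < ε)
    (h : φ (ε • w) ≠ 0) :
    ∃ (U : Set (Ed d)) (a b : ℝ), IsOpen U ∧ w ∈ U ∧ 0 < a ∧ a < b ∧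
      ∀ η ∈ U, ∀ ε ∈ Set.Icc a b, φ (ε • η) ≠ 0 := by
  have hc : Continuous (fun q : ℝ × Ed d => φ (q.1 • q.2)) :=
    hφ.comp (continuous_fst.smul continuous_snd)
  have hn : {q : ℝ × Ed d | φ (q.1 • q.2) ≠ 0} ∈ nhds (ε, w) :=
    (isOpen_ne.preimage hc).mem_nhds h
  obtain ⟨A, hA, V, hV, hAV⟩ := mem_nhds_prod_iff.1 hn
  obtain ⟨U, hUV, hU, hwU⟩ := mem_nhds_iff.1 hV
  obtain ⟨κ, hκ, hκA⟩ := Metric.mem_nhds_iff.1 hA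
  refine ⟨U, ε, ε + κ / 2, hU, hwU, hε, by linarith, fun η hη e he => ?_⟩
  refine hAV (Set.mk_mem_prod (hκA ?_) (hUV hη))
  rw [Metric.mem_ball, Real.dist_eq, abs_of_nonneg (by linarith [he.1])]
  linarith [he.2]

lemma exists_symbols {d : ℕ} {φ : Ed d → ℂ} (hφ : ContDiff ℝ ∞ φ)
    (hnd : ∀ ξ : Ed d, ξ ≠ 0 → ∃ ε : ℝ, 0 < ε ∧ φ (ε • ξ) ≠ 0) :
    ∃ g P : Ed d → ℂ, ContDiff ℝ ∞ g ∧ HasCompactSupport g ∧ ContDiff ℝ ∞ P ∧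
      HasCompactSupport P ∧ g 0 = 0 ∧ P 0 = 1 ∧
      ∀ (ξ : Ed d) (δ R : ℝ), 0 < δ → δ ≤ R →
        ∫ ε in δ..R, φ (ε • ξ) * g (ε • ξ) * (ε : ℂ)⁻¹ = P (δ • ξ) - P (R • ξ) := by
  have hloc : ∀ w : Ed d, w ∈ Metric.sphere (0 : Ed d) 1 →
      ∃ (U : Set (Ed d)) (a b : ℝ), IsOpen U ∧ w ∈ U ∧ 0 < a ∧ a < b ∧
      ∀ η ∈ U, ∀ ε ∈ Set.Icc a b, φ (ε • η) ≠ 0 := by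
    intro w hw
    have : w ≠ 0 := by rintro rfl; simp at hw
    obtain ⟨ε, hε, h⟩ := hnd w this
    exact exists_local hφ.continuous hε h
  choose! U a b hU hwU ha hab hne using hloc
  obtain ⟨t, hts, htc⟩ := (isCompact_sphere (0 : Ed d) 1).elim_nhds_subcover U
    (fun w hw => (hU w hw).mem_nhds (hwU w hw))
  obtain ⟨F, hF⟩ := SmoothPartitionOfUnity.exists_isSubordinate (modelWithCornersSelf ℝ (Ed d))
    (Metric.isClosed_sphere (x := (0 : Ed d)) (ε := 1)) (fun i : t => U i)
    (fun i => hU i (hts i i.2)) (by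
      intro x hx
      obtain ⟨i, hi, hxi⟩ := Set.mem_iUnion₂.1 (htc hx)
      exact Set.mem_iUnion.2 ⟨⟨i, hi⟩, hxi⟩)
  have hsum : ∀ x ∈ Metric.sphere (0 : Ed d) 1, ∑ i, F i x = 1 := by
    intro x hx
    have := F.sum_eq_one hx
    rwa [finsum_eq_sum_of_fintype] at this
  have hFs : ∀ i, ContDiff ℝ ∞ (F i) := fun i => (F i).contMDiff.contDiff
  have ha' : ∀ i : t, 0 < a i := fun i => ha i (hts i i.2)
  have hab' : ∀ i : t, a i < b i := fun i => hab i (hts i i.2)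
  have hne' : ∀ i : t, ∀ η ∈ tsupport (F i), ∀ ε ∈ Set.Icc (a i) (b i), φ (ε • η) ≠ 0 :=
    fun i η hη => hne i (hts i i.2) η (hF i hη)
  set m : t → ℝ → ℝ := fun i u => -(u * deriv (qcut (a i) (b i)) u) with hm
  have hm0 : ∀ i : t, ∀ u, u ∉ Set.Icc (a i) (b i) → m i u = 0 := by
    intro i u hu; simp [hm, deriv_qcut_zero (hab' i) hu]
  set g : Ed d → ℂ := fun ξ => ∑ i, (angRad (F i) (m i) ξ : ℂ) / φ ξ with hg
  set P : Ed d → ℂ := fun ξ =>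
    ((1 - ∑ i, angRad (F i) (fun u => 1 - qcut (a i) (b i) u) ξ : ℝ) : ℂ) with hP
  have hφg : ∀ ξ, φ ξ * g ξ = ∑ i, (angRad (F i) (m i) ξ : ℂ) := by
    intro ξ
    simp only [hg, Finset.mul_sum]
    refine Finset.sum_congr rfl fun i _ => ?_
    by_cases h : φ ξ = 0
    · have := (angRad_eventually_zero (ha' i) (hm0 i) φ (hne' i) h).eq_of_nhds
      simp [h, this]
    · field_simp
  have hgs : ContDiff ℝ ∞ g := ContDiff.sum fun i _ =>
    contDiff_angRad_div (ha' i) (hFs i) (contDiff_uq _ _) (hm0 i) hφ (hne' i)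
  have hPs : ContDiff ℝ ∞ P := by
    refine Complex.ofRealCLM.contDiff.comp (contDiff_const.sub (ContDiff.sum fun i _ => ?_))
    refine contDiff_angRad (ha' i) (hFs i) (contDiff_const.sub (contDiff_qcut _ _)) ?_
    intro u hu
    rw [qcut_one (hab' i) hu.le, sub_self]
  set B : ℝ := ∑ i : t, b i with hB
  have hbB : ∀ i : t, b i ≤ B := fun i =>
    Finset.single_le_sum (f := fun i : t => b i) (fun j _ => ((ha' j).trans (hab' j)).le)
      (Finset.mem_univ i)
  have hB0 : 0 ≤ B := Finset.sum_nonneg fun j _ => ((ha' j).trans (hab' j)).le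
  have hsph : ∀ ξ : Ed d, ξ ≠ 0 → ‖ξ‖⁻¹ • ξ ∈ Metric.sphere (0 : Ed d) 1 := by
    intro ξ hξ
    simp [norm_smul, norm_ne_zero_iff.2 hξ]
  have hgc : HasCompactSupport g := by
    refine HasCompactSupport.intro (isCompact_closedBall (0 : Ed d) B) fun ξ hξ => ?_
    rw [mem_closedBall_zero_iff, not_le] at hξ
    refine Finset.sum_eq_zero fun i _ => ?_
    have : m i ‖ξ‖ = 0 := hm0 i _ fun h => absurd (h.2.trans (hbB i)) (not_le.2 hξ)
    simp [angRad, this]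
  have hPc : HasCompactSupport P := by
    refine HasCompactSupport.intro (isCompact_closedBall (0 : Ed d) B) fun ξ hξ => ?_
    rw [mem_closedBall_zero_iff, not_le] at hξ
    have hξ0 : ξ ≠ 0 := norm_pos_iff.1 (hB0.trans_lt hξ)
    have := hsum _ (hsph ξ hξ0)
    simp only [hP, angRad]
    have h2 : ∑ i, F i (‖ξ‖⁻¹ • ξ) * (1 - qcut (a i) (b i) ‖ξ‖) = 1 := by
      refine (Finset.sum_congr rfl (fun i _ => ?_)).trans this
      rw [qcut_zero (hab' i) ((hbB i).trans hξ.le)]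
      ring
    rw [h2]; simp
  refine ⟨g, P, hgs, hgc, hPs, hPc, ?_, ?_, ?_⟩
  · simp [hg, angRad, hm]
  · simp only [hP, angRad, norm_zero]
    rw [Finset.sum_eq_zero]
    · simp
    · intro i _
      rw [qcut_one (hab' i) (ha' i).le]; ring
  · intro ξ δ R hδ hδR
    have hder : ∀ ε ∈ Set.uIcc δ R, HasDerivAt (fun ε : ℝ => -P (ε • ξ))
        (φ (ε • ξ) * g (ε • ξ) * (ε : ℂ)⁻¹) ε := by
      intro ε hε
      rw [Set.uIcc_of_le hδR] at hε
      have hε0 : 0 < ε := hδ.trans_le hε.1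
      have h1 : HasDerivAt (fun ε : ℝ => -(1 - ∑ i, F i (‖ξ‖⁻¹ • ξ) *
          (1 - qcut (a i) (b i) (ε * ‖ξ‖))))
          (∑ i, F i (‖ξ‖⁻¹ • ξ) * m i (ε * ‖ξ‖) * ε⁻¹) ε := by
        have h2 : ∀ i ∈ Finset.univ, HasDerivAt (fun ε : ℝ => F i (‖ξ‖⁻¹ • ξ) *
          (1 - qcut (a i) (b i) (ε * ‖ξ‖))) (F i (‖ξ‖⁻¹ • ξ) * m i (ε * ‖ξ‖) * ε⁻¹) ε := by
          intro i _
          have h3 : HasDerivAt (qcut (a i) (b i)) (deriv (qcut (a i) (b i)) (ε * ‖ξ‖)) (ε * ‖ξ‖) :=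
            ((contDiff_qcut (a i) (b i)).differentiable (by simp) _).hasDerivAt
          have h4 := h3.comp ε ((hasDerivAt_id ε).mul_const ‖ξ‖)
          have h5 := (h4.const_sub 1).const_mul (F i (‖ξ‖⁻¹ • ξ))
          refine h5.congr_deriv ?_
          simp only [hm]
          field_simp
        have := ((HasDerivAt.fun_sum h2).const_sub 1).neg
        refine this.congr_deriv ?_
        simp
      have h6 := h1.ofReal_comp
      refine (h6.congr_deriv ?_).congr_of_eventuallyEq ?_
      · rw [hφg, Finset.sum_mul]
        push_cast
        refine Finset.sum_congr rfl fun i _ => ?_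
        rw [angRad_smul _ _ hε0]
        push_cast; ring
      · filter_upwards [lt_mem_nhds hε0] with e he
        simp only [hP]
        simp_rw [angRad_smul _ _ he]
        push_cast; ring
    rw [intervalIntegral.integral_eq_sub_of_hasDerivAt hder]
    · ring
    · refine ContinuousOn.intervalIntegrable ?_
      rw [Set.uIcc_of_le hδR]
      refine ContinuousOn.mul (Continuous.continuousOn ?_) ?_
      · exact (hφ.continuous.comp (continuous_id.smul continuous_const)).mul
          (hgs.continuous.comp (continuous_id.smul continuous_const))
      · refine ContinuousOn.inv₀ (by fun_prop) fun x hx => ?_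
        exact_mod_cast (hδ.trans_le hx.1).ne'

lemma calderon_pair {d : ℕ} (Φ : SchwartzMap (Ed d) ℂ)
    (hnd : ∀ ξ : Ed d, ξ ≠ 0 → ∃ ε : ℝ, 0 < ε ∧ 𝓕 (fun s => Φ s) (ε • ξ) ≠ 0) :
    ∃ Ψ p : SchwartzMap (Ed d) ℂ, 𝓕 (fun s => Ψ s) 0 = 0 ∧ 𝓕 (fun s => p s) 0 = 1 ∧
      ∀ (ξ : Ed d) (δ R : ℝ), 0 < δ → δ ≤ R →
        ∫ ε in δ..R, 𝓕 (fun s => Φ s) (ε • ξ) * 𝓕 (fun s => Ψ s) (ε • ξ) * (ε : ℂ)⁻¹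
          = 𝓕 (fun s => p s) (δ • ξ) - 𝓕 (fun s => p s) (R • ξ) := by
  obtain ⟨g, P, hg, hgc, hP, hPc, hg0, hP0, h⟩ := exists_symbols
    (φ := 𝓕 (fun s => Φ s)) ((𝓕 Φ : SchwartzMap (Ed d) ℂ).smooth ⊤) hnd
  refine ⟨𝓕⁻ (hgc.toSchwartzMap hg), 𝓕⁻ (hPc.toSchwartzMap hP), ?_⟩
  have e : ∀ T : SchwartzMap (Ed d) ℂ, 𝓕 (fun s => (𝓕⁻ T : SchwartzMap (Ed d) ℂ) s) = fun s => T s := by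
    intro T
    have : (𝓕 (𝓕⁻ T) : SchwartzMap (Ed d) ℂ) = T := FourierTransform.fourier_fourierInv_eq T
    ext s
    exact congrArg (fun S : SchwartzMap (Ed d) ℂ => S s) this
  rw [e, e]
  exact ⟨hg0, hP0, h⟩

end

lemma dil_inversion {d : ℕ} (Θ : SchwartzMap (Ed d) ℂ) {ε : ℝ} (hε : 0 < ε) (x : Ed d) :
    dil d Θ ε x = ∫ ξ, Real.fourierChar (inner ℝ ξ x) • 𝓕 (fun s => Θ s) (ε • ξ) := by
  have e : 𝓕 (dil d Θ ε) = fun ξ => 𝓕 (fun s => Θ s) (ε • ξ) := funext (fourier_dil Θ hε)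
  have hi : Integrable (𝓕 (dil d Θ ε)) := by
    rw [e]
    exact ((𝓕 Θ : SchwartzMap (Ed d) ℂ).integrable).comp_smul hε.ne'
  have := (continuous_dil Θ ε).fourierInv_fourier_eq (integrable_dil Θ hε) hi
  rw [← congrFun this x, Real.fourierInv_eq, e]

lemma dil_conv {d : ℕ} (Φ Ψ : SchwartzMap (Ed d) ℂ) :
    ∃ Q : SchwartzMap (Ed d) ℂ,
      (∀ ξ, 𝓕 (fun s => Q s) ξ = 𝓕 (fun s => Φ s) ξ * 𝓕 (fun s => Ψ s) ξ) ∧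
      ∀ ε : ℝ, 0 < ε → ∀ t u, ∫ s, dil d Φ ε (s - t) * dil d Ψ ε (u - s) = dil d Q ε (u - t) := by
  refine ⟨SchwartzMap.convolution (ContinuousLinearMap.mul ℂ ℂ) Φ Ψ, fun ξ => ?_, ?_⟩
  · exact (SchwartzMap.fourier_convolution_apply (ContinuousLinearMap.mul ℂ ℂ) Φ Ψ ξ).trans
      (Real.fourier_mul_convolution_eq Φ.integrable Ψ.integrable ξ)
  · intro ε hε t u
    have h1 : ∫ s, dil d Φ ε (s - t) * dil d Ψ ε (u - s)
        = ∫ s, dil d Φ ε s * dil d Ψ ε (u - t - s) := by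
      rw [← integral_sub_right_eq_self (fun s => dil d Φ ε s * dil d Ψ ε (u - t - s)) t]
      congr 1; ext s; congr 2; abel
    rw [h1]
    set x := u - t
    have := Measure.integral_comp_smul (μ := (volume : Measure (Ed d)))
      (fun v => Φ v * Ψ (ε⁻¹ • x - v)) ε⁻¹
    have hd : Module.finrank ℝ (Ed d) = d := by simp
    rw [hd, abs_of_pos (by positivity), inv_pow, inv_inv] at this
    have hε0 : (ε : ℂ) ^ d ≠ 0 := pow_ne_zero _ (by exact_mod_cast hε.ne')
    simp only [dil]
    rw [SchwartzMap.convolution_apply, convolution_def]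
    simp only [ContinuousLinearMap.mul_apply']
    have e : ∀ s, ((ε : ℂ) ^ d)⁻¹ * Φ (ε⁻¹ • s) * (((ε : ℂ) ^ d)⁻¹ * Ψ (ε⁻¹ • (x - s)))
      = (((ε : ℂ) ^ d)⁻¹ * ((ε : ℂ) ^ d)⁻¹) * (Φ (ε⁻¹ • s) * Ψ (ε⁻¹ • x - ε⁻¹ • s)) := by
      intro s; rw [smul_sub]; ring
    simp_rw [e]
    rw [integral_const_mul, this, Complex.real_smul]
    push_cast
    field_simp

lemma calderon_phys {d : ℕ} (Q p : SchwartzMap (Ed d) ℂ)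
    (h : ∀ (ξ : Ed d) (δ R : ℝ), 0 < δ → δ ≤ R →
        ∫ ε in δ..R, 𝓕 (fun s => Q s) (ε • ξ) * (ε : ℂ)⁻¹
          = 𝓕 (fun s => p s) (δ • ξ) - 𝓕 (fun s => p s) (R • ξ))
    {δ R : ℝ} (hδ : 0 < δ) (hR : δ ≤ R) (x : Ed d) :
    ∫ ε in Set.Ioc δ R, dil d Q ε x * (ε : ℂ)⁻¹ = dil d p δ x - dil d p R x := by
  have hR0 := hδ.trans_le hR
  have h_integ : ∀ (T : SchwartzMap (Ed d) ℂ) {ε : ℝ} (hε : 0 < ε), Integrable (fun ξ : Ed d =>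
      Real.fourierChar (inner ℝ ξ x) • 𝓕 (fun s => T s) (ε • ξ)) := by
    intro T ε hε
    have h1 : Integrable (fun ξ : Ed d => 𝓕 (fun s => T s) (ε • ξ)) :=
      ((𝓕 T : SchwartzMap (Ed d) ℂ).integrable).comp_smul hε.ne'
    refine h1.mono ?_ (Filter.Eventually.of_forall fun ξ => by simp)
    refine Continuous.aestronglyMeasurable ?_
    have := continuous_fourier (h := fun s => T s) T.integrable
    have := Real.continuous_fourierChar
    fun_prop
  have e1 : ∫ ε in Set.Ioc δ R, dil d Q ε x * (ε : ℂ)⁻¹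
      = ∫ ε in Set.Ioc δ R, ∫ ξ, Real.fourierChar (inner ℝ ξ x) •
          (𝓕 (fun s => Q s) (ε • ξ) * (ε : ℂ)⁻¹) := by
    refine setIntegral_congr_fun measurableSet_Ioc fun ε hε => ?_
    rw [dil_inversion Q (hδ.trans hε.1), ← integral_mul_const]
    congr 1; ext ξ; rw [smul_mul_assoc]
  rw [e1, integral_integral_swap]
  · rw [dil_inversion p hδ, dil_inversion p hR0, ← integral_sub (h_integ p hδ) (h_integ p hR0)]
    congr 1; ext ξ
    rw [← smul_sub, ← h ξ δ R hδ hR, intervalIntegral.integral_of_le hR]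
    simp only [Circle.smul_def]
    rw [integral_smul]
  · obtain ⟨C, hC, hb⟩ := sch_decay (𝓕 Q : SchwartzMap (Ed d) ℂ) (d + 1)
    set m := min 1 δ with hm
    have hm0 : 0 < m := lt_min one_pos hδ
    have hb1 : ∀ ε ∈ Set.Ioc δ R, ∀ ξ : Ed d,
        ‖𝓕 (fun s => Q s) (ε • ξ) * (ε : ℂ)⁻¹‖ ≤ δ⁻¹ * (C * (m ^ (d+1))⁻¹ * wt ξ) := by
      intro ε hε ξ
      have hε0 := hδ.trans hε.1
      have h1 := hb (ε • ξ)
      have h2 : m * (1 + ‖ξ‖) ≤ 1 + ‖ε • ξ‖ := by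
        rw [norm_smul, Real.norm_of_nonneg hε0.le]
        have : m ≤ 1 := min_le_left _ _
        have h3 : m ≤ ε := (min_le_right _ _).trans hε.1.le
        nlinarith [norm_nonneg ξ]
      have h4 : ‖𝓕 (fun s => Q s) (ε • ξ)‖ ≤ C * (m ^ (d+1))⁻¹ * wt ξ := by
        have h5 : ‖𝓕 (fun s => Q s) (ε • ξ)‖ * (m * (1 + ‖ξ‖)) ^ (d+1) ≤ C :=
          (mul_le_mul_of_nonneg_left (pow_le_pow_left₀ (by positivity) h2 _) (norm_nonneg _)).trans h1
        rw [wt, mul_assoc, ← mul_inv, ← mul_pow, ← div_eq_mul_inv, le_div_iff₀ (by positivity)]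
        exact h5
      rw [norm_mul, norm_inv, Complex.norm_real, Real.norm_of_nonneg hε0.le, mul_comm]
      gcongr
      exact hε.1.le
    have hi : Integrable (fun q : ℝ × Ed d => δ⁻¹ * (C * (m ^ (d+1))⁻¹ * wt q.2))
        ((volume.restrict (Set.Ioc δ R)).prod volume) := by
      have := (integrable_const (μ := volume.restrict (Set.Ioc δ R)) (1:ℝ)).mul_prod
        ((integrable_wt (d := d)).const_mul (δ⁻¹ * (C * (m ^ (d+1))⁻¹)))
      refine this.congr (Filter.Eventually.of_forall fun q => ?_)
      simp only; ring
    refine hi.mono' ?_ ?_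
    · have c := continuous_fourier (h := fun s => Q s) Q.integrable
      have c2 := Real.continuous_fourierChar
      have : Measurable (fun q : ℝ × Ed d => Real.fourierChar (inner ℝ q.2 x) •
          (𝓕 (fun s => Q s) (q.1 • q.2) * (q.1 : ℂ)⁻¹)) := by
        refine Measurable.smul (Continuous.measurable (by fun_prop)) (Measurable.mul (Continuous.measurable (by fun_prop)) ?_)
        exact (Complex.continuous_ofReal.measurable.comp measurable_fst).inv
      exact this.aestronglyMeasurable
    · have : (volume.restrict (Set.Ioc δ R)).prod (volume : Measure (Ed d))
          = ((volume : Measure ℝ).prod volume).restrict (Set.Ioc δ R ×ˢ Set.univ) := by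
        rw [← Measure.prod_restrict, Measure.restrict_univ]
      rw [this]
      refine ae_restrict_of_forall_mem (measurableSet_Ioc.prod MeasurableSet.univ) fun q hq => ?_
      simp only [Function.uncurry, Circle.norm_smul]
      exact hb1 q.1 hq.1 q.2

lemma dil_unif {d : ℕ} (Θ : SchwartzMap (Ed d) ℂ) (M : ℕ) {δ R : ℝ} (hδ : 0 < δ) (hR : δ ≤ R) :
    ∃ C : ℝ, 0 < C ∧ ∀ ε : ℝ, δ ≤ ε → ε ≤ R → ∀ x, ‖dil d Θ ε x‖ ≤ C * ((1 + ‖x‖) ^ M)⁻¹ := by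
  obtain ⟨C, hC, hb⟩ := sch_decay Θ M
  have hR0 := hδ.trans_le hR
  set m := min 1 R⁻¹ with hm
  have hm0 : 0 < m := lt_min one_pos (inv_pos.2 hR0)
  refine ⟨(δ ^ d)⁻¹ * (C * (m ^ M)⁻¹), by positivity, fun ε h1 h2 x => ?_⟩
  have hε0 := hδ.trans_le h1
  rw [norm_dil _ hε0, mul_assoc]
  have h3 : m * (1 + ‖x‖) ≤ 1 + ‖ε⁻¹ • x‖ := by
    rw [norm_smul, Real.norm_of_nonneg (by positivity)]
    have a1 : m ≤ 1 := min_le_left _ _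
    have a2 : m ≤ ε⁻¹ := (min_le_right _ _).trans (by gcongr)
    nlinarith [norm_nonneg x]
  have h4 : ‖Θ (ε⁻¹ • x)‖ ≤ C * (m ^ M)⁻¹ * ((1 + ‖x‖) ^ M)⁻¹ := by
    have h5 : ‖Θ (ε⁻¹ • x)‖ * (m * (1 + ‖x‖)) ^ M ≤ C :=
      (mul_le_mul_of_nonneg_left (pow_le_pow_left₀ (by positivity) h3 _)
        (norm_nonneg _)).trans (hb _)
    rw [mul_assoc, ← mul_inv, ← mul_pow, ← div_eq_mul_inv, le_div_iff₀ (by positivity)]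
    exact h5
  gcongr

lemma wt_shift1 {d : ℕ} (M : ℕ) {u : Ed d} (hu : ‖u‖ ≤ 1) (s : Ed d) :
    ((1 + ‖u - s‖) ^ M)⁻¹ ≤ 2 ^ M * ((1 + ‖s‖) ^ M)⁻¹ := by
  rw [← div_eq_mul_inv, le_div_iff₀ (by positivity), inv_mul_le_iff₀ (by positivity), ← mul_pow]
  refine pow_le_pow_left₀ (by positivity) ?_ _
  have : ‖s‖ ≤ ‖u - s‖ + ‖u‖ := by
    rw [norm_sub_rev]
    simpa using norm_add_le (s - u) u
  nlinarith [norm_nonneg (u - s)]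

lemma wt_shift2 {d : ℕ} (M : ℕ) (s t : Ed d) :
    ((1 + ‖s - t‖) ^ M)⁻¹ ≤ (1 + ‖s‖) ^ M * ((1 + ‖t‖) ^ M)⁻¹ := by
  rw [← div_eq_mul_inv, le_div_iff₀ (by positivity), inv_mul_le_iff₀ (by positivity), ← mul_pow]
  refine pow_le_pow_left₀ (by positivity) ?_ _
  have : ‖t‖ ≤ ‖s - t‖ + ‖s‖ := by
    rw [norm_sub_rev]
    simpa using norm_add_le (t - s) s
  nlinarith [norm_nonneg (s - t), norm_nonneg s, mul_nonneg (norm_nonneg (s - t)) (norm_nonneg s)]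

/-- measure on the slab -/
def nuS (d : ℕ) (δ R : ℝ) : Measure (ℝ × Ed d) := (volume.restrict (Set.Ioc δ R)).prod volume

instance (d : ℕ) (δ R : ℝ) : SFinite (nuS d δ R) := by unfold nuS; infer_instance

lemma nuS_eq (d : ℕ) (δ R : ℝ) :
    nuS d δ R = ((volume : Measure ℝ).prod volume).restrict (Set.Ioc δ R ×ˢ Set.univ) := by
  rw [nuS, ← Measure.prod_restrict, Measure.restrict_univ]

lemma nuS_le {d : ℕ} {δ R : ℝ} (hδ : 0 < δ) : nuS d δ R ≤ nu d := by
  have : nu d = ((volume : Measure ℝ).prod volume).restrict (Set.Ioi 0 ×ˢ Set.univ) := by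
    rw [nu, ← Measure.prod_restrict, Measure.restrict_univ]
  rw [this, nuS_eq]
  refine Measure.restrict_mono (Set.prod_mono (fun x hx => hδ.trans hx.1) le_rfl) le_rfl

/-- the four-variable integrand -/
def FF {d : ℕ} (Φ Ψ f h : Ed d → ℂ) (a : ℝ × Ed d) (b : Ed d × Ed d) : ℂ :=
  (a.1 : ℂ)⁻¹ * ((dil d Φ a.1 (a.2 - b.1) * f b.1) * (dil d Ψ a.1 (b.2 - a.2) * h b.2))

lemma integrable_FF {d : ℕ} (Φ Ψ : SchwartzMap (Ed d) ℂ) {f h : Ed d → ℂ} (hf : Adm f)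
    (hm : Measurable h) (h1 : Integrable h) (hh : ∀ x, x ∉ Metric.ball (0 : Ed d) 1 → h x = 0)
    {δ R : ℝ} (hδ : 0 < δ) (hR : δ ≤ R) :
    Integrable (Function.uncurry (FF Φ Ψ f h)) ((nuS d δ R).prod (volume.prod volume)) := by
  obtain ⟨C1, hC1, hb1⟩ := dil_unif Φ (d + 1) hδ hR
  obtain ⟨C2, hC2, hb2⟩ := dil_unif Ψ ((d + 1) + (d + 1)) hδ hR
  have I1 : Integrable (fun a : ℝ × Ed d => (δ⁻¹ * C1 * C2 * 2 ^ ((d + 1) + (d + 1))) * wt a.2)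
      (nuS d δ R) := by
    have := (integrable_const (μ := volume.restrict (Set.Ioc δ R)) (1:ℝ)).mul_prod
        ((integrable_wt (d := d)).const_mul (δ⁻¹ * C1 * C2 * 2 ^ ((d + 1) + (d + 1))))
    simpa [nuS] using this
  have I2 : Integrable (fun b : Ed d × Ed d => (‖f b.1‖ * wt b.1) * ‖h b.2‖)
      (volume.prod volume) := hf.int1.mul_prod h1.norm
  have I := I1.mul_prod I2
  refine I.mono' ?_ ?_
  · have m1 : Measurable (fun q : (ℝ × Ed d) × (Ed d × Ed d) => dil d Φ q.1.1 (q.1.2 - q.2.1)) :=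
      (measurable_dil2 Φ).comp (f := fun q : (ℝ × Ed d) × (Ed d × Ed d) =>
        (q.1.1, q.1.2 - q.2.1)) (by fun_prop)
    have m2 : Measurable (fun q : (ℝ × Ed d) × (Ed d × Ed d) => dil d Ψ q.1.1 (q.2.2 - q.1.2)) :=
      (measurable_dil2 Ψ).comp (f := fun q : (ℝ × Ed d) × (Ed d × Ed d) =>
        (q.1.1, q.2.2 - q.1.2)) (by fun_prop)
    have m3 := hf.meas
    refine Measurable.aestronglyMeasurable ?_
    unfold FF Function.uncurry
    refine Measurable.mul ?_ ((m1.mul (by fun_prop)).mul (m2.mul (by fun_prop)))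
    exact (Complex.continuous_ofReal.measurable.comp (by fun_prop)).inv
  · have : (nuS d δ R).prod ((volume : Measure (Ed d)).prod (volume : Measure (Ed d)))
          = (((volume : Measure ℝ).prod volume).prod (volume.prod volume)).restrict
            ((Set.Ioc δ R ×ˢ Set.univ) ×ˢ Set.univ) := by
      rw [← Measure.prod_restrict, Measure.restrict_univ, nuS_eq]
    rw [this]
    refine ae_restrict_of_forall_mem
      ((measurableSet_Ioc.prod MeasurableSet.univ).prod MeasurableSet.univ) fun q hq => ?_
    obtain ⟨⟨ε, s⟩, ⟨t, u⟩⟩ := q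
    have hε : ε ∈ Set.Ioc δ R := hq.1.1
    have hε0 : 0 < ε := hδ.trans hε.1
    simp only [Function.uncurry, FF]
    by_cases hu : u ∈ Metric.ball (0 : Ed d) 1
    · have hu1 : ‖u‖ ≤ 1 := (mem_ball_zero_iff.1 hu).le
      have a1 := (hb1 ε hε.1.le hε.2 (s - t)).trans
        (mul_le_mul_of_nonneg_left (wt_shift2 (d + 1) s t) hC1.le)
      have a2 := (hb2 ε hε.1.le hε.2 (u - s)).trans
        (mul_le_mul_of_nonneg_left (wt_shift1 ((d + 1) + (d + 1)) hu1 s) hC2.le)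
      have a3 : ‖(ε : ℂ)⁻¹‖ ≤ δ⁻¹ := by
        rw [norm_inv, Complex.norm_real, Real.norm_of_nonneg hε0.le]
        exact inv_anti₀ hδ hε.1.le
      rw [norm_mul, norm_mul, norm_mul, norm_mul]
      calc _ ≤ δ⁻¹ * (((C1 * ((1 + ‖s‖) ^ (d + 1) * ((1 + ‖t‖) ^ (d + 1))⁻¹)) * ‖f t‖) *
            ((C2 * (2 ^ (d + 1 + (d + 1)) * ((1 + ‖s‖) ^ (d + 1 + (d + 1)))⁻¹)) * ‖h u‖)) := by
            gcongr
        _ = _ := by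
            unfold wt
            rw [pow_add (1 + ‖s‖)]
            have : (1 + ‖s‖) ^ (d + 1) ≠ 0 := by positivity
            field_simp
            ring
    · simp [hh u hu]

lemma fubini_main {d : ℕ} (Φ Ψ p Q : SchwartzMap (Ed d) ℂ)
    (hQ : ∀ ε : ℝ, 0 < ε → ∀ t u,
      ∫ s, dil d Φ ε (s - t) * dil d Ψ ε (u - s) = dil d Q ε (u - t))
    {δ R : ℝ} (hδ : 0 < δ) (hR : δ ≤ R)
    (hp : ∀ x, ∫ ε in Set.Ioc δ R, dil d Q ε x * (ε : ℂ)⁻¹ = dil d p δ x - dil d p R x)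
    {f h : Ed d → ℂ} (hf : Adm f)
    (hm : Measurable h) (h1 : Integrable h) (hh : ∀ x, x ∉ Metric.ball (0 : Ed d) 1 → h x = 0) :
    ∫ a, (a.1 : ℂ)⁻¹ * (cnv d (dil d Φ a.1) f a.2 * ∫ u, dil d Ψ a.1 (u - a.2) * h u)
        ∂(nuS d δ R)
      = ∫ b : Ed d × Ed d, f b.1 * h b.2 * (dil d p δ (b.2 - b.1) - dil d p R (b.2 - b.1))
        ∂(volume.prod volume) := by
  have I := integrable_FF Φ Ψ hf hm h1 hh hδ hR
  have e1 : ∀ a : ℝ × Ed d, (a.1 : ℂ)⁻¹ * (cnv d (dil d Φ a.1) f a.2 *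
      ∫ u, dil d Ψ a.1 (u - a.2) * h u) = ∫ b, FF Φ Ψ f h a b ∂(volume.prod volume) := by
    intro a
    unfold FF cnv
    rw [integral_const_mul]
    congr 1
    exact (integral_prod_mul (fun t => dil d Φ a.1 (a.2 - t) * f t)
      (fun u => dil d Ψ a.1 (u - a.2) * h u)).symm
  simp_rw [e1]
  rw [integral_integral_swap I]
  have I2 : ∀ᵐ b ∂((volume : Measure (Ed d)).prod (volume : Measure (Ed d))),
      Integrable (fun a => FF Φ Ψ f h a b) (nuS d δ R) := I.prod_left_ae
  refine integral_congr_ae ?_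
  filter_upwards [I2] with b hb
  rw [nuS] at hb ⊢
  rw [integral_prod _ hb, ← hp, ← integral_const_mul]
  refine setIntegral_congr_fun measurableSet_Ioc fun ε hε => ?_
  simp only [FF]
  rw [← hQ ε (hδ.trans hε.1), ← integral_mul_const, ← integral_const_mul]
  congr 1; ext s; ring

lemma ennreal_add_sq_le (x y : ENNReal) : (x + y) ^ 2 ≤ 4 * x ^ 2 + 4 * y ^ 2 := by
  rcases le_total x y with h | h
  · calc (x + y) ^ 2 ≤ (y + y) ^ 2 := by gcongr
      _ = 4 * y ^ 2 := by ring
      _ ≤ _ := le_add_self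
  · calc (x + y) ^ 2 ≤ (x + x) ^ 2 := by gcongr
      _ = 4 * x ^ 2 := by ring
      _ ≤ _ := le_self_add

lemma integrable_dil_mul {d : ℕ} (Φ : SchwartzMap (Ed d) ℂ) {f : Ed d → ℂ} (hf : Adm f)
    {ε : ℝ} (hε : 0 < ε) (s : Ed d) : Integrable (fun t => dil d Φ ε (s - t) * f t) := by
  obtain ⟨C, hC, hb⟩ := dil_unif Φ (d + 1) hε (le_refl ε)
  refine (hf.int1.const_mul (C * (1 + ‖s‖) ^ (d + 1))).mono' ?_
    (Filter.Eventually.of_forall fun t => ?_)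
  · have := continuous_dil Φ ε
    exact (Continuous.aestronglyMeasurable (by fun_prop)).mul hf.meas.aestronglyMeasurable
  · have := (hb ε le_rfl le_rfl (s - t)).trans
        (mul_le_mul_of_nonneg_left (wt_shift2 (d + 1) s t) hC.le)
    rw [norm_mul]
    calc _ ≤ (C * ((1 + ‖s‖) ^ (d + 1) * ((1 + ‖t‖) ^ (d + 1))⁻¹)) * ‖f t‖ := by gcongr
      _ = _ := by unfold wt; ring

lemma cnv_split {d : ℕ} (Φ : SchwartzMap (Ed d) ℂ) {f : Ed d → ℂ} (hf : Adm f)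
    {ε : ℝ} (hε : 0 < ε) (s : Ed d) (r : ℝ) :
    cnv d (dil d Φ ε) f s = cnv d (dil d Φ ε) (Set.indicator (Metric.ball 0 r) f) s
      + cnv d (dil d Φ ε) (Set.indicator (Metric.ball 0 r)ᶜ f) s := by
  have I := integrable_dil_mul Φ hf hε s
  unfold cnv
  have e : ∀ A : Set (Ed d), (fun t => dil d Φ ε (s - t) * Set.indicator A f t)
      = Set.indicator A (fun t => dil d Φ ε (s - t) * f t) := by
    intro A; ext t
    by_cases h : t ∈ A <;> simp [h]
  rw [e, e, integral_indicator measurableSet_ball, integral_indicator measurableSet_ball.compl,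
    integral_add_compl measurableSet_ball I]

lemma cnv_far {d : ℕ} (Φ : SchwartzMap (Ed d) ℂ) {f : Ed d → ℂ} (hf : Adm f) {R : ℝ}
    (hR : 0 < R) : ∃ K : ℝ, 0 ≤ K ∧ ∀ ε : ℝ, 0 < ε → ∀ s ∈ Metric.ball (0 : Ed d) R,
      ‖cnv d (dil d Φ ε) (Set.indicator (Metric.ball 0 (2 * R))ᶜ f) s‖ ≤ K * ε := by
  obtain ⟨C, hC, hb⟩ := dil_bound Φ 1
  set c : ℝ := (2 * (1 + (2 * R)⁻¹)) ^ (d + 1) with hc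
  have hc0 : 0 < c := by positivity
  refine ⟨C * c * ∫ t, ‖f t‖ * wt t, ?_, fun ε hε s hs => ?_⟩
  · have : 0 ≤ ∫ t, ‖f t‖ * wt t := integral_nonneg fun t => by have := wt_pos t; positivity
    positivity
  · have e : C * c * (∫ t, ‖f t‖ * wt t) * ε = ∫ t, (C * c * ε) * (‖f t‖ * wt t) := by
      rw [integral_const_mul]; ring
    rw [e]
    unfold cnv
    refine norm_integral_le_of_norm_le (hf.int1.const_mul _) (Filter.Eventually.of_forall fun t => ?_)
    have hw := wt_pos t
    by_cases ht : t ∈ Metric.ball (0 : Ed d) (2 * R)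
    · simp only [Set.mem_compl_iff, ht, not_true_eq_false, not_false_eq_true,
        Set.indicator_of_notMem, mul_zero, norm_zero]
      positivity
    · rw [Set.indicator_of_mem (by exact ht), norm_mul]
      have ht1 : 2 * R ≤ ‖t‖ := by simpa using ht
      have hs1 : ‖s‖ < R := by simpa using hs
      have h1 : ‖t‖ ≤ ‖s - t‖ + ‖s‖ := by
        rw [norm_sub_rev]
        simpa using norm_add_le (t - s) s
      have h2 : 1 + ‖t‖ ≤ (2 * (1 + (2 * R)⁻¹)) * (ε + ‖s - t‖) := by
        have : 1 ≤ (2 * R)⁻¹ * ‖t‖ := by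
          rw [inv_mul_eq_div, le_div_iff₀ (by positivity)]; linarith
        have h3 : ‖t‖ ≤ 2 * (ε + ‖s - t‖) := by linarith
        have h4 : 0 < (2 * R)⁻¹ := by positivity
        nlinarith
      have h5 : ‖dil d Φ ε (s - t)‖ ≤ C * ε * (c * wt t) := by
        refine (hb ε (s - t) hε).trans ?_
        rw [pow_one, mul_div_assoc, div_eq_mul_inv, ← mul_assoc]
        refine mul_le_mul_of_nonneg_left ?_ (by positivity)
        rw [wt, hc, ← div_eq_mul_inv, le_div_iff₀ (by positivity), inv_mul_le_iff₀ (by positivity),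
          ← mul_pow]
        refine pow_le_pow_left₀ (by positivity) ?_ _
        linarith
      calc _ ≤ C * ε * (c * wt t) * ‖f t‖ := by gcongr
        _ = _ := by ring

/-- the Carleson box -/
def bx (d : ℕ) (R : ℝ) : Set (ℝ × Ed d) := Set.Ioc 0 R ×ˢ Metric.ball 0 R

lemma measurableSet_bx (d : ℕ) (R : ℝ) : MeasurableSet (bx d R) :=
  measurableSet_Ioc.prod measurableSet_ball

lemma nu_restrict_bx (d : ℕ) (R : ℝ) : (nu d).restrict (bx d R)
    = (volume.restrict (Set.Ioc 0 R)).prod (volume.restrict (Metric.ball 0 R)) := by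
  rw [nu, bx, ← Measure.prod_restrict, Measure.restrict_restrict measurableSet_Ioc,
    Set.inter_eq_left.2 (fun x hx => hx.1)]

lemma box_finite {d : ℕ} (Φ : SchwartzMap (Ed d) ℂ) (h0 : 𝓕 (fun x => Φ x) 0 = 0)
    {f : Ed d → ℂ} (hf : Adm f) {R : ℝ} (hR : 0 < R) :
    ∫⁻ p in bx d R, ‖cnv d (dil d Φ p.1) f p.2‖ₑ ^ 2 * ENNReal.ofReal p.1⁻¹ ∂(nu d) < ⊤ := by
  obtain ⟨C, hC, hsq⟩ := square_fn Φ h0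
  obtain ⟨K, hK, hfar⟩ := cnv_far Φ hf hR
  set f1 := Set.indicator (Metric.ball 0 (2 * R)) f with hf1
  have hf1m : Measurable f1 := hf.meas.indicator measurableSet_ball
  have hf12 : MemLp f1 2 := hf.memLp_ball _
  have hf11 : Integrable f1 := integrable_of_memLp_ball hf12
    (fun x hx => Set.indicator_of_notMem hx _)
  have hle : ∫⁻ p in bx d R, ‖cnv d (dil d Φ p.1) f p.2‖ₑ ^ 2 * ENNReal.ofReal p.1⁻¹ ∂(nu d)
      ≤ ∫⁻ p in bx d R, (4 * (‖cnv d (dil d Φ p.1) f1 p.2‖ₑ ^ 2 * ENNReal.ofReal p.1⁻¹)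
          + 4 * ENNReal.ofReal (K ^ 2 * R)) ∂(nu d) := by
    refine setLIntegral_mono' (measurableSet_bx d R) fun p hp => ?_
    have hε : 0 < p.1 := hp.1.1
    rw [cnv_split Φ hf hε p.2 (2 * R)]
    refine (mul_le_mul_left ((pow_le_pow_left' (enorm_add_le _ _) 2).trans
      (ennreal_add_sq_le _ _)) _).trans ?_
    rw [add_mul, mul_assoc, mul_assoc]
    refine add_le_add le_rfl (mul_le_mul_right ?_ _)
    rw [← ofReal_norm, ← ENNReal.ofReal_pow (norm_nonneg _), ← ENNReal.ofReal_mul (by positivity)]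
    refine ENNReal.ofReal_le_ofReal ?_
    have := hfar p.1 hε p.2 hp.2
    calc _ ≤ (K * p.1) ^ 2 * p.1⁻¹ := by gcongr
      _ = K ^ 2 * p.1 := by field_simp
      _ ≤ _ := by gcongr; exact hp.1.2
  refine hle.trans_lt ?_
  rw [lintegral_add_right _ measurable_const]
  refine ENNReal.add_lt_top.2 ⟨?_, ?_⟩
  · rw [lintegral_const_mul' _ _ (by simp)]
    refine ENNReal.mul_lt_top (by simp) (((setLIntegral_le_lintegral _ _).trans
      (hsq f1 hf1m hf11 hf12)).trans_lt ?_)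
    refine ENNReal.mul_lt_top (by simp) ?_
    have := hf12.2
    rw [eLpNorm_lt_top_iff_lintegral_rpow_enorm_lt_top (by simp) (by simp)] at this
    simpa using this
  · rw [lintegral_const]
    refine ENNReal.mul_lt_top (ENNReal.mul_lt_top (by simp) (by simp)) ?_
    rw [nu_restrict_bx, Measure.prod_apply MeasurableSet.univ]
    simp
    exact ENNReal.mul_lt_top measure_ball_lt_top (by simp)

lemma box_carleson {d : ℕ} (Φ : SchwartzMap (Ed d) ℂ) (h0 : 𝓕 (fun x => Φ x) 0 = 0)
    {f : Ed d → ℂ} (hf : Adm f) {R : ℝ} (hR : 0 < R) :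
    ∫⁻ p in bx d R, ‖cnv d (dil d Φ p.1) f p.2‖ₑ ^ 2 * ENNReal.ofReal p.1⁻¹ ∂(nu d)
      = ENNReal.ofReal (∫ s in Metric.ball 0 R,
              ∫ ε in Set.Ioc (0 : ℝ) R, ‖cnv d (dil d (fun x => Φ x) ε) f s‖ ^ 2 / ε) := by
  have hfin := box_finite Φ h0 hf hR
  have e : ∀ p : ℝ × Ed d, ‖cnv d (dil d Φ p.1) f p.2‖ₑ ^ 2 * ENNReal.ofReal p.1⁻¹
      = ENNReal.ofReal (‖cnv d (dil d Φ p.1) f p.2‖ ^ 2 / p.1) := by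
    intro p
    rw [← ofReal_norm, ← ENNReal.ofReal_pow (norm_nonneg _), ← ENNReal.ofReal_mul (by positivity),
      div_eq_mul_inv]
  simp_rw [e] at hfin ⊢
  have hm : Measurable (fun p : ℝ × Ed d => ‖cnv d (dil d Φ p.1) f p.2‖ ^ 2 / p.1) :=
    ((measurable_cnv Φ hf.meas).norm.pow_const 2).div measurable_fst
  have hnn : 0 ≤ᵐ[(nu d).restrict (bx d R)]
      (fun p : ℝ × Ed d => ‖cnv d (dil d Φ p.1) f p.2‖ ^ 2 / p.1) := by
    refine ae_restrict_of_forall_mem (measurableSet_bx d R) fun p hp => ?_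
    have : 0 < p.1 := hp.1.1
    positivity
  have hi : Integrable (fun p : ℝ × Ed d => ‖cnv d (dil d Φ p.1) f p.2‖ ^ 2 / p.1)
      ((nu d).restrict (bx d R)) :=
    (lintegral_ofReal_ne_top_iff_integrable hm.aestronglyMeasurable hnn).1 hfin.ne
  rw [← ofReal_integral_eq_lintegral_ofReal hi hnn]
  rw [nu_restrict_bx] at hi ⊢
  rw [integral_prod_symm _ hi]

/-- the weight on the half space -/
def ww {d : ℕ} (p : ℝ × Ed d) : ℝ := ((1 + (p.1 + ‖p.2‖)) ^ (d + 1))⁻¹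

lemma weighted_box {d : ℕ} {G : ℝ × Ed d → ENNReal} (hG : Measurable G) {A : ENNReal}
    (h : ∀ k : ℕ, ∫⁻ p in bx d (2 ^ k), G p ∂(nu d) ≤ A * 2 ^ (k * d)) :
    ∫⁻ p, G p * ENNReal.ofReal (ww p) ∂(nu d) ≤ A * 2 ^ (d + 1) := by
  have hpt : ∀ᵐ p ∂(nu d), G p * ENNReal.ofReal (ww p) ≤
      ∑' k : ℕ, (2⁻¹ : ENNReal) ^ (k * (d + 1)) * Set.indicator (bx d (2 ^ (k + 1))) G p := by
    have : nu d = ((volume : Measure ℝ).prod volume).restrict (Set.Ioi 0 ×ˢ Set.univ) := by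
      rw [nu, ← Measure.prod_restrict, Measure.restrict_univ]
    rw [this]
    refine ae_restrict_of_forall_mem (measurableSet_Ioi.prod MeasurableSet.univ) fun p hp => ?_
    have hε : 0 < p.1 := hp.1
    have hs := norm_nonneg p.2
    obtain ⟨k, hk1, hk2⟩ := exists_nat_pow_near (x := 1 + (p.1 + ‖p.2‖)) (y := 2) (by linarith)
      (by norm_num)
    have hmem : p ∈ bx d (2 ^ (k + 1)) := by
      refine ⟨⟨hε, by linarith⟩, ?_⟩
      rw [mem_ball_zero_iff]; linarith
    refine le_trans ?_ (ENNReal.le_tsum k)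
    rw [Set.indicator_of_mem hmem, mul_comm]
    refine mul_le_mul_left ?_ _
    have : (2⁻¹ : ENNReal) ^ (k * (d + 1)) = ENNReal.ofReal (((2:ℝ) ^ k) ^ (d + 1))⁻¹ := by
      rw [← pow_mul, ENNReal.ofReal_inv_of_pos (by positivity), ENNReal.ofReal_pow (by norm_num),
        ENNReal.inv_pow]
      simp
    rw [this]
    refine ENNReal.ofReal_le_ofReal ?_
    unfold ww
    gcongr
  refine (lintegral_mono_ae hpt).trans ?_
  rw [lintegral_tsum]
  · have hk : ∀ k : ℕ, ∫⁻ p, (2⁻¹ : ENNReal) ^ (k * (d + 1)) *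
        Set.indicator (bx d (2 ^ (k + 1))) G p ∂(nu d) ≤ A * 2 ^ d * (2⁻¹) ^ k := by
      intro k
      rw [lintegral_const_mul' _ _ (by simp), lintegral_indicator (measurableSet_bx _ _)]
      refine (mul_le_mul_right (h (k + 1)) _).trans (le_of_eq ?_)
      have h1 : (2⁻¹ : ENNReal) ^ (k * d) * 2 ^ (k * d) = 1 := by
        rw [← mul_pow, ENNReal.inv_mul_cancel (by simp) (by simp), one_pow]
      calc _ = A * 2 ^ d * (2⁻¹) ^ k * ((2⁻¹ : ENNReal) ^ (k * d) * 2 ^ (k * d)) := by ring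
        _ = _ := by rw [h1, mul_one]
    refine (ENNReal.tsum_le_tsum hk).trans ?_
    rw [ENNReal.tsum_mul_left, ENNReal.tsum_geometric, ENNReal.one_sub_inv_two, inv_inv, pow_succ,
      mul_assoc]
  · intro k
    exact ((hG.indicator (measurableSet_bx _ _)).const_mul _).aemeasurable

lemma weighted_carleson {d : ℕ} (Φ : SchwartzMap (Ed d) ℂ) (h0 : 𝓕 (fun x => Φ x) 0 = 0) :
    ∃ C : ℝ, 0 < C ∧ ∀ {f : Ed d → ℂ} (hf : Adm f) {N : ℝ}, 0 ≤ N →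
      (∀ r : ℝ, 0 < r →
          ∫ s in Metric.ball 0 r,
              ∫ ε in Set.Ioc (0 : ℝ) r, ‖cnv d (dil d (fun x => Φ x) ε) f s‖ ^ 2 / ε ≤
            N ^ 2 * (volume (Metric.ball (0 : Ed d) r)).toReal) →
    ∫⁻ p, ‖cnv d (dil d Φ p.1) f p.2‖ₑ ^ 2 * ENNReal.ofReal p.1⁻¹ * ENNReal.ofReal (ww p) ∂(nu d)
      ≤ ENNReal.ofReal (C * N ^ 2) := by
  set V := (volume (Metric.ball (0 : Ed d) 1)).toReal with hV
  have hV0 : 0 < V := ENNReal.toReal_pos (Metric.measure_ball_pos _ _ one_pos).ne'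
    measure_ball_lt_top.ne
  refine ⟨V * 2 ^ (d + 1), by positivity, fun {f} hf {N} hN h => ?_⟩
  have hm : Measurable (fun p : ℝ × Ed d =>
      ‖cnv d (dil d Φ p.1) f p.2‖ₑ ^ 2 * ENNReal.ofReal p.1⁻¹) :=
    ((measurable_cnv Φ hf.meas).enorm.pow_const 2).mul (measurable_fst.inv.ennreal_ofReal)
  refine (weighted_box hm (A := ENNReal.ofReal (N ^ 2 * V)) fun k => ?_).trans (le_of_eq ?_)
  · rw [box_carleson Φ h0 hf (by positivity)]
    refine (ENNReal.ofReal_le_ofReal (h _ (by positivity))).trans (le_of_eq ?_)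
    rw [Measure.addHaar_ball_of_pos _ _ (by positivity), ENNReal.toReal_mul,
      ENNReal.toReal_ofReal (by positivity), ← hV]
    have : (2 : ENNReal) ^ (k * d) = ENNReal.ofReal (2 ^ (k * d)) := by
      rw [ENNReal.ofReal_pow (by norm_num)]; simp
    rw [this, ← ENNReal.ofReal_mul (by positivity)]
    congr 1
    simp [pow_mul]
    ring
  · have : (2 : ENNReal) ^ (d + 1) = ENNReal.ofReal (2 ^ (d + 1)) := by
      rw [ENNReal.ofReal_pow (by norm_num)]; simp
    rw [this, ← ENNReal.ofReal_mul (by positivity)]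
    congr 1
    ring

lemma lint_cs {α : Type*} [MeasurableSpace α] (μ : Measure α) {F G : α → ENNReal}
    (hF : AEMeasurable F μ) (hG : AEMeasurable G μ) :
    (∫⁻ x, F x * G x ∂μ) ^ 2 ≤ (∫⁻ x, F x ^ 2 ∂μ) * ∫⁻ x, G x ^ 2 ∂μ := by
  have h2 : Real.HolderConjugate 2 2 := Real.HolderConjugate.two_two
  have := ENNReal.lintegral_mul_le_Lp_mul_Lq μ h2 hF hG
  simp only [Pi.mul_apply] at this
  refine (pow_le_pow_left' this 2).trans (le_of_eq ?_)
  rw [mul_pow]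
  simp only [ENNReal.rpow_ofNat]
  rw [← ENNReal.rpow_natCast, ← ENNReal.rpow_natCast, ← ENNReal.rpow_mul, ← ENNReal.rpow_mul]
  norm_num

lemma refl_exists {d : ℕ} (Θ : SchwartzMap (Ed d) ℂ) :
    ∃ Θ' : SchwartzMap (Ed d) ℂ, (∀ x, Θ' x = Θ (-x)) ∧
      𝓕 (fun x => Θ' x) 0 = 𝓕 (fun x => Θ x) 0 := by
  refine ⟨SchwartzMap.compCLMOfContinuousLinearEquiv ℝ (ContinuousLinearEquiv.neg ℝ) Θ,
    fun x => by simp, ?_⟩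
  rw [Real.fourier_eq, Real.fourier_eq]
  simp only [inner_zero_right, neg_zero, AddChar.map_zero_eq_one, one_smul]
  rw [← integral_neg_eq_self]
  simp

lemma cnv_refl {d : ℕ} {Θ Θ' : SchwartzMap (Ed d) ℂ} (h : ∀ x, Θ' x = Θ (-x)) (ε : ℝ)
    (g : Ed d → ℂ) (s : Ed d) :
    ∫ u, dil d Θ ε (u - s) * g u = cnv d (dil d Θ' ε) g s := by
  unfold cnv
  congr 1; ext u
  simp only [dil, h, ← smul_neg, neg_sub]

lemma lint_sq_lt_top {α : Type*} [MeasurableSpace α] {μ : Measure α} {h : α → ℂ}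
    (h2 : MemLp h 2 μ) : ∫⁻ x, ‖h x‖ₑ ^ 2 ∂μ < ⊤ := by
  have := h2.2
  rw [eLpNorm_lt_top_iff_lintegral_rpow_enorm_lt_top (by simp) (by simp)] at this
  simpa using this

lemma l1_l2 {d : ℕ} {h : Ed d → ℂ} (hm : Measurable h)
    (hh : ∀ x, x ∉ Metric.ball (0 : Ed d) 1 → h x = 0) :
    (∫⁻ x, ‖h x‖ₑ) ^ 2 ≤ volume (Metric.ball (0 : Ed d) 1) * ∫⁻ x, ‖h x‖ₑ ^ 2 := by
  have := lint_cs volume (F := Set.indicator (Metric.ball (0 : Ed d) 1) (fun _ => (1 : ENNReal)))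
    (G := fun x => ‖h x‖ₑ) (measurable_const.indicator measurableSet_ball).aemeasurable
    hm.enorm.aemeasurable
  have e1 : ∀ x, Set.indicator (Metric.ball (0 : Ed d) 1) (fun _ => (1 : ENNReal)) x * ‖h x‖ₑ
      = ‖h x‖ₑ := by
    intro x
    by_cases hx : x ∈ Metric.ball (0 : Ed d) 1
    · simp [hx]
    · simp [hh x hx]
  have e2 : ∀ x, Set.indicator (Metric.ball (0 : Ed d) 1) (fun _ => (1 : ENNReal)) x ^ 2
      = Set.indicator (Metric.ball (0 : Ed d) 1) (fun _ => (1 : ENNReal)) x := by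
    intro x
    by_cases hx : x ∈ Metric.ball (0 : Ed d) 1 <;> simp [hx]
  simp_rw [e1, e2] at this
  rwa [lintegral_indicator_const measurableSet_ball, one_mul] at this

lemma nu_eq (d : ℕ) :
    nu d = ((volume : Measure ℝ).prod volume).restrict (Set.Ioi 0 ×ˢ Set.univ) := by
  rw [nu, ← Measure.prod_restrict, Measure.restrict_univ]

lemma nu_forall {d : ℕ} {P : ℝ × Ed d → Prop} (h : ∀ p : ℝ × Ed d, 0 < p.1 → P p) :
    ∀ᵐ p ∂(nu d), P p := by
  rw [nu_eq]
  exact ae_restrict_of_forall_mem (measurableSet_Ioi.prod MeasurableSet.univ) fun p hp => h p hp.1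

lemma far_bound {d : ℕ} (Ψ : SchwartzMap (Ed d) ℂ) :
    ∃ C : ℝ, 0 < C ∧ ∀ h : Ed d → ℂ, Integrable h →
      (∀ x, x ∉ Metric.ball (0 : Ed d) 1 → h x = 0) → ∫ x, h x = 0 →
      ∀ p : ℝ × Ed d, 0 < p.1 → 2 ≤ p.1 + ‖p.2‖ →
        ‖∫ u, dil d Ψ p.1 (u - p.2) * h u‖ ^ 2 * p.1⁻¹ * (ww p)⁻¹
          ≤ C * ((1 + ‖p‖) ^ (d + 2))⁻¹ * (∫ x, ‖h x‖) ^ 2 := by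
  obtain ⟨C, hC, hb⟩ := dil_diff Ψ 1
  refine ⟨C ^ 2 * 2 ^ (2 * (d + 2)), by positivity, ?_⟩
  rintro h h1 hh h0 ⟨ε, s⟩ hε hρ
  simp only at hε hρ ⊢
  set L := ∫ x, ‖h x‖ with hL
  have hL0 : 0 ≤ L := integral_nonneg fun x => norm_nonneg _
  set ρ := ε + ‖s‖ with hρd
  have hρ0 : 0 < ρ := by linarith
  have I1 : Integrable (fun u => dil d Ψ ε (u - s) * h u) := by
    obtain ⟨K, hK, hKb⟩ := dil_bdd Ψ hε
    have c := continuous_dil Ψ ε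
    exact h1.bdd_mul (c := K) (Continuous.aestronglyMeasurable (by fun_prop))
      (Filter.Eventually.of_forall fun x => hKb _)
  have e1 : ∫ u, dil d Ψ ε (u - s) * h u
      = ∫ u, (dil d Ψ ε (u - s) - dil d Ψ ε (-s)) * h u := by
    simp_rw [sub_mul]
    rw [integral_sub I1 (h1.const_mul _), integral_const_mul, h0, mul_zero, sub_zero]
  have e2 : ‖∫ u, dil d Ψ ε (u - s) * h u‖ ≤ C * ε / ρ ^ (d + 2) * L := by
    rw [e1, hL, ← integral_const_mul]
    refine norm_integral_le_of_norm_le (h1.norm.const_mul _)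
      (Filter.Eventually.of_forall fun u => ?_)
    by_cases hu : u ∈ Metric.ball (0 : Ed d) 1
    · have := hb ε s u hε (mem_ball_zero_iff.1 hu).le hρ
      rw [pow_one] at this
      rw [norm_mul]
      exact mul_le_mul_of_nonneg_right this (norm_nonneg _)
    · simp [hh u hu]
  have hw : (ww (ε, s))⁻¹ = (1 + ρ) ^ (d + 1) := by simp [ww, hρd]
  rw [hw]
  have h3 : ‖((ε, s) : ℝ × Ed d)‖ ≤ ρ := by
    rw [Prod.norm_def]
    simp only [hρd]
    refine max_le ?_ ?_
    · rw [Real.norm_of_nonneg hε.le]; linarith [norm_nonneg s]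
    · linarith
  have h4 : ρ⁻¹ ≤ 2 * (1 + ρ)⁻¹ := by
    rw [← div_eq_mul_inv, le_div_iff₀ (by positivity), inv_mul_le_iff₀ hρ0]; linarith
  calc _ ≤ (C * ε / ρ ^ (d + 2) * L) ^ 2 * ε⁻¹ * (1 + ρ) ^ (d + 1) := by gcongr
    _ = C ^ 2 * L ^ 2 * (ε * (1 + ρ) ^ (d + 1)) * (ρ⁻¹) ^ (2 * (d + 2)) := by
        rw [inv_pow, pow_mul' ρ 2]; field_simp
    _ ≤ C ^ 2 * L ^ 2 * ((1 + ρ) * (1 + ρ) ^ (d + 1)) * (2 * (1 + ρ)⁻¹) ^ (2 * (d + 2)) := by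
        gcongr
        linarith [norm_nonneg s]
    _ = C ^ 2 * 2 ^ (2 * (d + 2)) * ((1 + ρ) ^ (d + 2))⁻¹ * L ^ 2 := by
        rw [mul_pow, inv_pow, pow_mul' (1 + ρ) 2]
        have : (1 + ρ) ^ (d + 2) ≠ 0 := by positivity
        have e : (1 + ρ) * (1 + ρ) ^ (d + 1) = (1 + ρ) ^ (d + 2) := by ring
        rw [e]
        field_simp
    _ ≤ _ := by gcongr

lemma far_weight_integrable (d : ℕ) :
    ∫⁻ p : ℝ × Ed d, ENNReal.ofReal ((1 + ‖p‖) ^ (d + 2))⁻¹ ∂((volume : Measure ℝ).prod volume)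
      < ⊤ := by
  have := integrable_one_add_norm (E := ℝ × Ed d) (μ := (volume : Measure ℝ).prod volume)
    (r := d + 2) (by simp; linarith)
  have e : ∀ p : ℝ × Ed d, (1 + ‖p‖) ^ (-((d : ℝ) + 2)) = ((1 + ‖p‖) ^ (d + 2))⁻¹ := by
    intro p
    rw [Real.rpow_neg (by positivity)]
    congr 1
    rw [← Real.rpow_natCast]; push_cast; rfl
  simp_rw [e] at this
  exact (lintegral_ofReal_ne_top_iff_integrable this.1
    (Filter.Eventually.of_forall fun p => by simp only [Pi.zero_apply]; positivity)).2 this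
    |>.lt_top

lemma dual_weighted {d : ℕ} (Ψ : SchwartzMap (Ed d) ℂ) (h0 : 𝓕 (fun x => Ψ x) 0 = 0) :
    ∃ C : ℝ, 0 < C ∧ ∀ h : Ed d → ℂ, Measurable h → MemLp h 2 →
      (∀ x, x ∉ Metric.ball (0 : Ed d) 1 → h x = 0) → ∫ x, h x = 0 →
      ∫⁻ p, ‖∫ u, dil d Ψ p.1 (u - p.2) * h u‖ₑ ^ 2 * ENNReal.ofReal p.1⁻¹ *
          ENNReal.ofReal (ww p)⁻¹ ∂(nu d) ≤ ENNReal.ofReal C * ∫⁻ x, ‖h x‖ₑ ^ 2 := by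
  obtain ⟨Ψ', hΨ', hΨ'0⟩ := refl_exists Ψ
  obtain ⟨C1, hC1, hsq⟩ := square_fn Ψ' (hΨ'0.trans h0)
  obtain ⟨C2, hC2, hfar⟩ := far_bound Ψ
  set M := ∫⁻ p : ℝ × Ed d, ENNReal.ofReal ((1 + ‖p‖) ^ (d + 2))⁻¹
    ∂((volume : Measure ℝ).prod volume) with hM
  have hMt : M < ⊤ := far_weight_integrable d
  set V := volume (Metric.ball (0 : Ed d) 1) with hV
  have hVt : V < ⊤ := measure_ball_lt_top
  set T := ENNReal.ofReal (3 ^ (d + 1)) * ENNReal.ofReal C1 + ENNReal.ofReal C2 * M * V with hT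
  have hTt : T < ⊤ := ENNReal.add_lt_top.2 ⟨ENNReal.mul_lt_top (by simp) (by simp),
    ENNReal.mul_lt_top (ENNReal.mul_lt_top (by simp) hMt) hVt⟩
  have hT0 : T ≠ 0 := by
    intro h
    rw [hT, add_eq_zero] at h
    have := h.1
    rw [mul_eq_zero, ENNReal.ofReal_eq_zero, ENNReal.ofReal_eq_zero] at this
    rcases this with h | h
    · have : (0:ℝ) < 3 ^ (d + 1) := by positivity
      linarith
    · linarith
  refine ⟨T.toReal, ENNReal.toReal_pos hT0 hTt.ne, fun h hm h2 hh hi0 => ?_⟩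
  rw [ENNReal.ofReal_toReal hTt.ne]
  have h1 : Integrable h := integrable_of_memLp_ball h2 hh
  have hL : ENNReal.ofReal ((∫ x, ‖h x‖) ^ 2) = (∫⁻ x, ‖h x‖ₑ) ^ 2 := by
    rw [ENNReal.ofReal_pow (integral_nonneg fun x => norm_nonneg _),
      ofReal_integral_norm_eq_lintegral_enorm h1]
  have hpt : ∀ᵐ p ∂(nu d), ‖∫ u, dil d Ψ p.1 (u - p.2) * h u‖ₑ ^ 2 * ENNReal.ofReal p.1⁻¹ *
          ENNReal.ofReal (ww p)⁻¹ ≤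
      ENNReal.ofReal (3 ^ (d + 1)) *
        (‖cnv d (dil d Ψ' p.1) h p.2‖ₑ ^ 2 * ENNReal.ofReal p.1⁻¹) +
      (ENNReal.ofReal C2 * (∫⁻ x, ‖h x‖ₑ) ^ 2) * ENNReal.ofReal ((1 + ‖p‖) ^ (d + 2))⁻¹ := by
    refine nu_forall fun p hp => ?_
    by_cases hρ : 2 ≤ p.1 + ‖p.2‖
    · refine le_trans ?_ le_add_self
      have := hfar h h1 hh hi0 p hp hρ
      rw [← hL, ← ENNReal.ofReal_mul hC2.le, ← ENNReal.ofReal_mul (by positivity), ← ofReal_norm,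
        ← ENNReal.ofReal_pow (norm_nonneg _), ← ENNReal.ofReal_mul (by positivity),
        ← ENNReal.ofReal_mul (by positivity)]
      refine ENNReal.ofReal_le_ofReal (this.trans (le_of_eq ?_))
      ring
    · refine le_trans ?_ le_self_add
      rw [cnv_refl hΨ', mul_comm]
      refine mul_le_mul_left (ENNReal.ofReal_le_ofReal ?_) _
      rw [ww, inv_inv]
      refine pow_le_pow_left₀ (by positivity) ?_ _
      linarith
  refine (lintegral_mono_ae hpt).trans ?_
  have mc : Measurable (fun p : ℝ × Ed d =>
      ‖cnv d (dil d Ψ' p.1) h p.2‖ₑ ^ 2 * ENNReal.ofReal p.1⁻¹) :=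
    ((measurable_cnv Ψ' hm).enorm.pow_const 2).mul (measurable_fst.inv.ennreal_ofReal)
  rw [lintegral_add_left (mc.const_mul _), lintegral_const_mul _ mc]
  have h3 : (∫⁻ x, ‖h x‖ₑ) ^ 2 ≤ V * ∫⁻ x, ‖h x‖ₑ ^ 2 := l1_l2 hm hh
  have hL1 : (ENNReal.ofReal C2 * (∫⁻ x, ‖h x‖ₑ) ^ 2) ≠ ⊤ := by
    rw [← hL]; exact (ENNReal.mul_lt_top (by simp) (by simp)).ne
  rw [lintegral_const_mul' _ _ hL1]
  have h4 : ∫⁻ p : ℝ × Ed d, ENNReal.ofReal ((1 + ‖p‖) ^ (d + 2))⁻¹ ∂(nu d) ≤ M := by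
    rw [nu_eq]; exact setLIntegral_le_lintegral _ _
  calc _ ≤ ENNReal.ofReal (3 ^ (d + 1)) * (ENNReal.ofReal C1 * ∫⁻ x, ‖h x‖ₑ ^ 2)
        + ENNReal.ofReal C2 * (V * ∫⁻ x, ‖h x‖ₑ ^ 2) * M := by
        gcongr
        exact hsq h hm h1 h2
    _ = _ := by rw [hT]; ring

lemma integrable_pair {d : ℕ} (p : SchwartzMap (Ed d) ℂ) {f h : Ed d → ℂ} (hf : Adm f)
    (hm : Measurable h) (h1 : Integrable h) (hh : ∀ x, x ∉ Metric.ball (0 : Ed d) 1 → h x = 0)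
    {ε : ℝ} (hε : 0 < ε) :
    Integrable (fun b : Ed d × Ed d => f b.1 * h b.2 * dil d p ε (b.2 - b.1))
      (volume.prod volume) := by
  obtain ⟨C, hC, hb⟩ := dil_unif p (d + 1) hε (le_refl ε)
  have I2 : Integrable (fun b : Ed d × Ed d => (‖f b.1‖ * wt b.1) * ‖h b.2‖)
      (volume.prod volume) := hf.int1.mul_prod h1.norm
  refine (I2.const_mul (C * 2 ^ (d + 1))).mono' ?_ (Filter.Eventually.of_forall fun b => ?_)
  · have c := (continuous_dil p ε).measurable
    have := hf.meas
    exact Measurable.aestronglyMeasurable (by fun_prop)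
  · obtain ⟨t, u⟩ := b
    simp only
    by_cases hu : u ∈ Metric.ball (0 : Ed d) 1
    · have hu1 : ‖u‖ ≤ 1 := (mem_ball_zero_iff.1 hu).le
      have a2 := (hb ε le_rfl le_rfl (u - t)).trans
        (mul_le_mul_of_nonneg_left (wt_shift1 (d + 1) hu1 t) hC.le)
      rw [norm_mul, norm_mul]
      calc _ ≤ ‖f t‖ * ‖h u‖ * (C * (2 ^ (d + 1) * ((1 + ‖t‖) ^ (d + 1))⁻¹)) := by gcongr
        _ = _ := by unfold wt; ring
    · simp [hh u hu]

lemma pair_inner {d : ℕ} {p p' : SchwartzMap (Ed d) ℂ} (hp : ∀ x, p' x = p (-x))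
    {f h : Ed d → ℂ} {ε : ℝ} (t : Ed d) :
    ∫ u, f t * h u * dil d p ε (u - t) = f t * cnv d (dil d p' ε) h t := by
  rw [← cnv_refl hp, ← integral_const_mul]
  congr 1; ext u; ring

lemma integrable_A {d : ℕ} {p p' : SchwartzMap (Ed d) ℂ} (hp : ∀ x, p' x = p (-x))
    {f h : Ed d → ℂ} (hf : Adm f)
    (hm : Measurable h) (h1 : Integrable h) (hh : ∀ x, x ∉ Metric.ball (0 : Ed d) 1 → h x = 0)
    {ε : ℝ} (hε : 0 < ε) : Integrable (fun t => f t * cnv d (dil d p' ε) h t) := by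
  have := (integrable_pair p hf hm h1 hh hε).integral_prod_left
  simpa only [pair_inner hp] using this

lemma pair_split {d : ℕ} {p p' : SchwartzMap (Ed d) ℂ} (hp : ∀ x, p' x = p (-x))
    {f h : Ed d → ℂ} (hf : Adm f)
    (hm : Measurable h) (h1 : Integrable h) (hh : ∀ x, x ∉ Metric.ball (0 : Ed d) 1 → h x = 0)
    {δ R : ℝ} (hδ : 0 < δ) (hR : 0 < R) :
    ∫ b : Ed d × Ed d, f b.1 * h b.2 * (dil d p δ (b.2 - b.1) - dil d p R (b.2 - b.1))
        ∂(volume.prod volume)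
      = (∫ t, f t * cnv d (dil d p' δ) h t) - ∫ t, f t * cnv d (dil d p' R) h t := by
  simp_rw [mul_sub]
  have i1 := integrable_pair p hf hm h1 hh hδ
  have i2 := integrable_pair p hf hm h1 hh hR
  rw [integral_sub i1 i2, integral_prod _ i1, integral_prod _ i2]
  simp only [pair_inner hp]

lemma lim_large {d : ℕ} {p p' : SchwartzMap (Ed d) ℂ} (hp : ∀ x, p' x = p (-x))
    {f h : Ed d → ℂ} (hf : Adm f)
    (hm : Measurable h) (h1 : Integrable h) (hh : ∀ x, x ∉ Metric.ball (0 : Ed d) 1 → h x = 0)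
    (h0 : ∫ x, h x = 0) :
    Filter.Tendsto (fun n : ℕ => ∫ t, f t * cnv d (dil d p' ((n : ℝ) + 2)) h t) Filter.atTop
      (nhds 0) := by
  obtain ⟨C, hC, hb⟩ := dil_diff p 0
  set L := ∫ x, ‖h x‖ with hL
  have hL0 : 0 ≤ L := integral_nonneg fun x => norm_nonneg _
  have key : ∀ R : ℝ, 2 ≤ R → ∀ t, ‖cnv d (dil d p' R) h t‖ ≤ C * ((R + ‖t‖) ^ (d + 1))⁻¹ * L := by
    intro R hR t
    have hR0 : 0 < R := by linarith
    rw [← cnv_refl hp]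
    have I1 : Integrable (fun u => dil d p R (u - t) * h u) := by
      obtain ⟨K, hK, hKb⟩ := dil_bdd p hR0
      have c := continuous_dil p R
      exact h1.bdd_mul (c := K) (Continuous.aestronglyMeasurable (by fun_prop))
        (Filter.Eventually.of_forall fun x => hKb _)
    have e1 : ∫ u, dil d p R (u - t) * h u
        = ∫ u, (dil d p R (u - t) - dil d p R (-t)) * h u := by
      simp_rw [sub_mul]
      rw [integral_sub I1 (h1.const_mul _), integral_const_mul, h0, mul_zero, sub_zero]
    rw [e1, hL, ← integral_const_mul]
    refine norm_integral_le_of_norm_le (h1.norm.const_mul _)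
      (Filter.Eventually.of_forall fun u => ?_)
    by_cases hu : u ∈ Metric.ball (0 : Ed d) 1
    · have := hb R t u hR0 (mem_ball_zero_iff.1 hu).le (by linarith [norm_nonneg t])
      rw [pow_zero, mul_one, add_zero, div_eq_mul_inv] at this
      rw [norm_mul]
      exact mul_le_mul_of_nonneg_right this (norm_nonneg _)
    · simp [hh u hu]
  have hz : (0 : ℂ) = ∫ t : Ed d, (0 : ℂ) := by simp
  rw [hz]
  refine tendsto_integral_of_dominated_convergence (fun t => C * L * (‖f t‖ * wt t))
    (fun n => (integrable_A hp hf hm h1 hh (by positivity)).1) (hf.int1.const_mul _)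
    (fun n => Filter.Eventually.of_forall fun t => ?_) (Filter.Eventually.of_forall fun t => ?_)
  · rw [norm_mul]
    have hn : (0:ℝ) ≤ n := n.cast_nonneg
    calc _ ≤ ‖f t‖ * (C * ((1 + ‖t‖) ^ (d + 1))⁻¹ * L) := by
          gcongr
          refine (key _ (by linarith) t).trans ?_
          gcongr
          linarith
      _ = _ := by unfold wt; ring
  · rw [tendsto_zero_iff_norm_tendsto_zero]
    have hlim : Filter.Tendsto (fun n : ℕ => (‖f t‖ * C * L) * ((n : ℝ) + 1)⁻¹) Filter.atTop
        (nhds 0) := by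
      have := (tendsto_one_div_add_atTop_nhds_zero_nat (𝕜 := ℝ)).const_mul (‖f t‖ * C * L)
      simpa using this
    refine squeeze_zero (fun n => norm_nonneg _) (fun n => ?_) hlim
    rw [norm_mul]
    have hn : (0:ℝ) ≤ n := n.cast_nonneg
    calc _ ≤ ‖f t‖ * (C * ((n : ℝ) + 1)⁻¹ * L) := by
          gcongr
          refine (key _ (by linarith) t).trans ?_
          gcongr
          have h3 : (1 : ℝ) ≤ (n : ℝ) + 2 + ‖t‖ := by linarith [norm_nonneg t]
          refine le_trans ?_ (le_self_pow₀ h3 (by omega))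
          linarith [norm_nonneg t]
      _ = _ := by ring

lemma integrable_fh {d : ℕ} {f h : Ed d → ℂ} (hf : Adm f) (h2 : MemLp h 2)
    (hh : ∀ x, x ∉ Metric.ball (0 : Ed d) 1 → h x = 0) : Integrable (fun t => f t * h t) := by
  have := (hf.memLp_ball 1).integrable_mul h2
  refine this.congr (Filter.Eventually.of_forall fun t => ?_)
  by_cases hu : t ∈ Metric.ball (0 : Ed d) 1
  · simp only [Pi.mul_apply, Set.indicator_of_mem hu]
  · simp [hh t hu]

lemma measurable_cnv_right {d : ℕ} (Θ : SchwartzMap (Ed d) ℂ) {h : Ed d → ℂ} (hm : Measurable h)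
    (δ : ℝ) : Measurable (cnv d (dil d Θ δ) h) := by
  have m : Measurable (fun t : Ed d => (δ, t)) := by fun_prop
  have := (measurable_cnv Θ hm).comp m
  exact this

set_option maxHeartbeats 1000000 in
lemma lim_small {d : ℕ} {p p' : SchwartzMap (Ed d) ℂ} (hp : ∀ x, p' x = p (-x))
    (hp0 : 𝓕 (fun x => p' x) 0 = 1)
    {f h : Ed d → ℂ} (hf : Adm f)
    (hm : Measurable h) (h2 : MemLp h 2) (hh : ∀ x, x ∉ Metric.ball (0 : Ed d) 1 → h x = 0) :
    Filter.Tendsto (fun n : ℕ => ∫ t, f t * cnv d (dil d p' ((n : ℝ) + 1)⁻¹) h t) Filter.atTop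
      (nhds (∫ t, f t * h t)) := by
  have h1 : Integrable h := integrable_of_memLp_ball h2 hh
  obtain ⟨C, hC, hb⟩ := dil_bound p 1
  set L := ∫ x, ‖h x‖ with hL
  have hL0 : 0 ≤ L := integral_nonneg fun x => norm_nonneg _
  have hfar : ∀ ε : ℝ, 0 < ε → ∀ t, t ∉ Metric.ball (0 : Ed d) 2 →
      ‖cnv d (dil d p' ε) h t‖ ≤ ε * (C * 3 ^ (d + 1) * L) * wt t := by
    intro ε hε t ht
    have ht2 : 2 ≤ ‖t‖ := by simpa using ht
    have e : ε * (C * 3 ^ (d + 1) * L) * wt t = ∫ u, (ε * (C * 3 ^ (d + 1)) * wt t) * ‖h u‖ := by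
      rw [integral_const_mul]; ring
    rw [← cnv_refl hp, e]
    have hw := wt_pos t
    refine norm_integral_le_of_norm_le (h1.norm.const_mul _)
      (Filter.Eventually.of_forall fun u => ?_)
    by_cases hu : u ∈ Metric.ball (0 : Ed d) 1
    · have hu1 := mem_ball_zero_iff.1 hu
      rw [norm_mul]
      refine mul_le_mul_of_nonneg_right ((hb ε (u - t) hε).trans ?_) (norm_nonneg _)
      have h3 : ‖t‖ ≤ ‖u - t‖ + ‖u‖ := by
        rw [norm_sub_rev]
        simpa using norm_add_le (t - u) u
      have h4 : 1 + ‖t‖ ≤ 3 * (ε + ‖u - t‖) := by linarith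
      have h5 : ((ε + ‖u - t‖) ^ (d + 1))⁻¹ ≤ 3 ^ (d + 1) * wt t := by
        rw [wt, ← div_eq_mul_inv, le_div_iff₀ (by positivity), inv_mul_le_iff₀ (by positivity),
          ← mul_pow]
        refine pow_le_pow_left₀ (by positivity) ?_ _
        linarith
      calc _ = C * ε * ((ε + ‖u - t‖) ^ (d + 1))⁻¹ := by rw [pow_one, div_eq_mul_inv]
        _ ≤ C * ε * (3 ^ (d + 1) * wt t) := by gcongr
        _ = _ := by ring
    · simp [hh u hu]
  set f1 := Set.indicator (Metric.ball (0 : Ed d) 2) f with hf1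
  have hf1m : Measurable f1 := hf.meas.indicator measurableSet_ball
  have hf12 : MemLp f1 2 := hf.memLp_ball _
  set S := ∫⁻ t, ‖f1 t‖ₑ ^ 2 with hS
  have hSt : S < ⊤ := lint_sq_lt_top hf12
  set K := C * 3 ^ (d + 1) * L with hK
  set J := ∫⁻ t, ENNReal.ofReal (K * (‖f t‖ * wt t)) with hJ
  have hJt : J < ⊤ := by
    have := (hf.int1.const_mul K).lintegral_lt_top
    exact this
  set E : ℕ → ENNReal := fun n => ∫⁻ s, ‖cnv d (dil d p' ((n : ℝ) + 1)⁻¹) h s - h s‖ₑ ^ 2 with hE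
  have hEl : Filter.Tendsto E Filter.atTop (nhds 0) := approx_id p' hp0 h1 h2
  have hbound : ∀ n : ℕ, ‖(∫ t, f t * cnv d (dil d p' ((n : ℝ) + 1)⁻¹) h t) - ∫ t, f t * h t‖ₑ
      ≤ (S * E n) ^ (1 / 2 : ℝ) + ENNReal.ofReal ((n : ℝ) + 1)⁻¹ * J := by
    intro n
    set δ : ℝ := ((n : ℝ) + 1)⁻¹ with hδ
    have hδ0 : 0 < δ := by positivity
    rw [← integral_sub (integrable_A hp hf hm h1 hh hδ0) (integrable_fh hf h2 hh)]
    refine (enorm_integral_le_lintegral_enorm _).trans ?_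
    have hcm : Measurable (cnv d (dil d p' δ) h) :=
      measurable_cnv_right p' hm δ
    have hgm : Measurable (fun t => ‖cnv d (dil d p' δ) h t - h t‖ₑ) := (hcm.sub hm).enorm
    calc _ ≤ ∫⁻ t, (‖f1 t‖ₑ * ‖cnv d (dil d p' δ) h t - h t‖ₑ
          + ENNReal.ofReal δ * ENNReal.ofReal (K * (‖f t‖ * wt t))) := by
          refine lintegral_mono fun t => ?_
          by_cases ht : t ∈ Metric.ball (0 : Ed d) 2
          · refine le_trans (le_of_eq ?_) le_self_add
            rw [hf1, Set.indicator_of_mem ht, ← enorm_mul, mul_sub]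
          · refine le_trans ?_ le_add_self
            have ht1 : t ∉ Metric.ball (0 : Ed d) 1 := fun h =>
              ht (Metric.ball_subset_ball (by norm_num) h)
            rw [hh t ht1, mul_zero, sub_zero, ← ENNReal.ofReal_mul hδ0.le, ← ofReal_norm, norm_mul]
            refine ENNReal.ofReal_le_ofReal ?_
            calc _ ≤ ‖f t‖ * (δ * K * wt t) := by gcongr; exact hfar δ hδ0 t ht
              _ = _ := by ring
      _ = (∫⁻ t, ‖f1 t‖ₑ * ‖cnv d (dil d p' δ) h t - h t‖ₑ) + ENNReal.ofReal δ * J := by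
          have hmm : Measurable (fun t => ‖f1 t‖ₑ * ‖cnv d (dil d p' δ) h t - h t‖ₑ) :=
            hf1m.enorm.mul hgm
          rw [lintegral_add_left hmm, lintegral_const_mul' _ _ (by simp)]
      _ ≤ _ := by
          refine add_le_add ?_ le_rfl
          have := lint_cs volume hf1m.enorm.aemeasurable hgm.aemeasurable
          have h3 := ENNReal.rpow_le_rpow this (z := 1 / 2) (by norm_num)
          rw [← ENNReal.rpow_natCast, ← ENNReal.rpow_mul] at h3
          norm_num at h3
          norm_num
          exact h3
  have hlim : Filter.Tendsto (fun n : ℕ => (S * E n) ^ (1 / 2 : ℝ) +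
      ENNReal.ofReal ((n : ℝ) + 1)⁻¹ * J) Filter.atTop (nhds 0) := by
    have a1 : Filter.Tendsto (fun n : ℕ => (S * E n) ^ (1 / 2 : ℝ)) Filter.atTop (nhds 0) := by
      have := (ENNReal.continuous_rpow_const (y := 1 / 2)).tendsto 0 |>.comp
        (by simpa using ENNReal.Tendsto.const_mul hEl (Or.inr hSt.ne) :
          Filter.Tendsto (fun n => S * E n) Filter.atTop (nhds 0))
      simpa [Function.comp_def] using this
    have a2 : Filter.Tendsto (fun n : ℕ => ENNReal.ofReal ((n : ℝ) + 1)⁻¹ * J) Filter.atTop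
        (nhds 0) := by
      have b : Filter.Tendsto (fun n : ℕ => ENNReal.ofReal ((n : ℝ) + 1)⁻¹) Filter.atTop
          (nhds 0) := by
        have := ENNReal.tendsto_ofReal (tendsto_one_div_add_atTop_nhds_zero_nat (𝕜 := ℝ))
        simpa using this
      simpa using ENNReal.Tendsto.mul_const b (Or.inr hJt.ne)
    simpa using a1.add a2
  rw [tendsto_iff_edist_tendsto_0]
  refine tendsto_of_tendsto_of_tendsto_of_le_of_le tendsto_const_nhds hlim (fun _ => zero_le)
    fun n => ?_
  rw [edist_eq_enorm_sub]
  exact hbound n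

lemma pairing_bound {d : ℕ} (Φ Ψ : SchwartzMap (Ed d) ℂ) {f h : Ed d → ℂ} (hf : Adm f)
    (hm : Measurable h) {δ R : ℝ} (hδ : 0 < δ) {A B : ENNReal}
    (hA : ∫⁻ p, ‖cnv d (dil d Φ p.1) f p.2‖ₑ ^ 2 * ENNReal.ofReal p.1⁻¹ *
      ENNReal.ofReal (ww p) ∂(nu d) ≤ A)
    (hB : ∫⁻ p, ‖∫ u, dil d Ψ p.1 (u - p.2) * h u‖ₑ ^ 2 * ENNReal.ofReal p.1⁻¹ *
          ENNReal.ofReal (ww p)⁻¹ ∂(nu d) ≤ B) :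
    ‖∫ a, (a.1 : ℂ)⁻¹ * (cnv d (dil d Φ a.1) f a.2 * ∫ u, dil d Ψ a.1 (u - a.2) * h u)
        ∂(nuS d δ R)‖ₑ ^ 2 ≤ A * B := by
  obtain ⟨Ψ', hΨ', -⟩ := refl_exists Ψ
  simp_rw [cnv_refl hΨ'] at hB ⊢
  set F : ℝ × Ed d → ENNReal := fun p => ‖cnv d (dil d Φ p.1) f p.2‖ₑ *
    ENNReal.ofReal √(p.1⁻¹) * ENNReal.ofReal √(ww p) with hF
  set G : ℝ × Ed d → ENNReal := fun p => ‖cnv d (dil d Ψ' p.1) h p.2‖ₑ *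
    ENNReal.ofReal √(p.1⁻¹) * ENNReal.ofReal √((ww p)⁻¹) with hG
  have hwm : Measurable (fun p : ℝ × Ed d => ww p) := by
    unfold ww
    fun_prop
  have hFm : Measurable F :=
    ((measurable_cnv Φ hf.meas).enorm.mul (measurable_fst.inv.sqrt.ennreal_ofReal)).mul
      hwm.sqrt.ennreal_ofReal
  have hGm : Measurable G :=
    ((measurable_cnv Ψ' hm).enorm.mul (measurable_fst.inv.sqrt.ennreal_ofReal)).mul
      hwm.inv.sqrt.ennreal_ofReal
  have hs : ∀ x : ℝ, 0 ≤ x → ENNReal.ofReal √x * ENNReal.ofReal √x = ENNReal.ofReal x := by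
    intro x hx
    rw [← ENNReal.ofReal_mul (Real.sqrt_nonneg _), Real.mul_self_sqrt hx]
  have hww : ∀ p : ℝ × Ed d, 0 < p.1 → 0 < ww p := by
    intro p hp; unfold ww; positivity
  have e1 : ‖∫ a, (a.1 : ℂ)⁻¹ * (cnv d (dil d Φ a.1) f a.2 * cnv d (dil d Ψ' a.1) h a.2)
        ∂(nuS d δ R)‖ₑ ≤ ∫⁻ p, F p * G p ∂(nu d) := by
    refine (enorm_integral_le_lintegral_enorm _).trans
      ((lintegral_mono' (nuS_le hδ) le_rfl).trans (lintegral_mono_ae (nu_forall fun p hp => ?_)))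
    have h1 : ENNReal.ofReal √(ww p) * ENNReal.ofReal √((ww p)⁻¹) = 1 := by
      rw [← ENNReal.ofReal_mul (Real.sqrt_nonneg _), ← Real.sqrt_mul (hww p hp).le,
        mul_inv_cancel₀ (hww p hp).ne']
      simp
    have h2 : ‖(p.1 : ℂ)⁻¹‖ₑ = ENNReal.ofReal p.1⁻¹ := by
      rw [← ofReal_norm, norm_inv, Complex.norm_real, Real.norm_of_nonneg hp.le]
    refine le_of_eq ?_
    rw [enorm_mul, enorm_mul, h2]
    simp only [hF, hG]
    calc _ = ENNReal.ofReal p.1⁻¹ * (‖cnv d (dil d Φ p.1) f p.2‖ₑ *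
          ‖cnv d (dil d Ψ' p.1) h p.2‖ₑ) * 1 := by rw [mul_one]
      _ = _ := by
        rw [← h1, ← hs p.1⁻¹ (inv_nonneg.2 hp.le)]; ring
  refine (pow_le_pow_left' e1 2).trans ((lint_cs _ hFm.aemeasurable hGm.aemeasurable).trans ?_)
  refine mul_le_mul' (le_trans (lintegral_mono_ae (nu_forall fun p hp => le_of_eq ?_)) hA)
    (le_trans (lintegral_mono_ae (nu_forall fun p hp => le_of_eq ?_)) hB)
  · rw [← hs p.1⁻¹ (inv_nonneg.2 hp.le), ← hs (ww p) (hww p hp).le]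
    simp only [hF]; ring
  · rw [← hs p.1⁻¹ (inv_nonneg.2 hp.le), ← hs (ww p)⁻¹ (inv_nonneg.2 (hww p hp).le)]
    simp only [hG]; ring

lemma unit_main {d : ℕ} (Φ : SchwartzMap (Ed d) ℂ) (hΦ0 : ∫ s, Φ s = 0)
    (hΦnd : ∀ ξ : Ed d, ξ ≠ 0 → ∃ ε : ℝ, 0 < ε ∧ 𝓕 (fun s => Φ s) (ε • ξ) ≠ 0) :
    ∃ C : ℝ, 0 < C ∧ ∀ (N : ℝ), 0 ≤ N → ∀ f : Ed d → ℂ, Adm f →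
        (∀ r : ℝ, 0 < r →
          ∫ s in Metric.ball (0 : Ed d) r,
              ∫ ε in Set.Ioc (0 : ℝ) r, ‖cnv d (dil d (fun x => Φ x) ε) f s‖ ^ 2 / ε ≤
            N ^ 2 * (volume (Metric.ball (0 : Ed d) r)).toReal) →
          ∫ t in Metric.ball (0 : Ed d) 1, ‖f t - avgB d f 0 1‖ ^ 2 ≤ C * N ^ 2 := by
  have h0 : 𝓕 (fun x => Φ x) 0 = 0 := by
    rw [Real.fourier_eq]; simpa using hΦ0
  obtain ⟨Ψ, p, hΨ0, hp0, hcal⟩ := calderon_pair Φ hΦnd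
  obtain ⟨Q, hQ1, hQ2⟩ := dil_conv Φ Ψ
  have hphys := fun {δ R : ℝ} (hδ : 0 < δ) (hR : δ ≤ R) => calderon_phys Q p
    (by intro ξ δ R hδ hR; simp_rw [hQ1]; exact hcal ξ δ R hδ hR) hδ hR
  obtain ⟨p', hp', hp'0⟩ := refl_exists p
  obtain ⟨C1, hC1, hcarl⟩ := weighted_carleson Φ h0
  obtain ⟨C2, hC2, hdual⟩ := dual_weighted Ψ hΨ0
  refine ⟨C1 * C2, by positivity, fun N hN f hf hyp => ?_⟩
  set c := avgB d f 0 1 with hc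
  set B := Metric.ball (0 : Ed d) 1 with hB
  have hBm : MeasurableSet B := measurableSet_ball
  set V := (volume B).toReal with hV
  have hV0 : 0 < V := ENNReal.toReal_pos (Metric.measure_ball_pos _ _ one_pos).ne'
    measure_ball_lt_top.ne
  set h : Ed d → ℂ := Set.indicator B (fun t => (starRingEnd ℂ) (f t - c)) with hh
  have hm : Measurable h :=
    (Complex.continuous_conj.measurable.comp (hf.meas.sub_const c)).indicator hBm
  have hsupp : ∀ x, x ∉ Metric.ball (0 : Ed d) 1 → h x = 0 := fun x hx =>
    Set.indicator_of_notMem hx _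
  have hfc2 : MemLp (Set.indicator B (fun t => f t - c)) 2 := by
    have hfB' : MemLp (Set.indicator B f) 2 := hf.memLp_ball 1
    have := hfB'.sub (memLp_indicator_const 2 hBm c (Or.inr measure_ball_lt_top.ne))
    refine this.ae_eq (Filter.Eventually.of_forall fun t => ?_)
    by_cases ht : t ∈ B
    · rw [Pi.sub_apply, Set.indicator_of_mem ht, Set.indicator_of_mem ht, Set.indicator_of_mem ht]
    · rw [Pi.sub_apply, Set.indicator_of_notMem ht, Set.indicator_of_notMem ht,
        Set.indicator_of_notMem ht, sub_zero]
  have hnorm : ∀ t, ‖h t‖ = ‖Set.indicator B (fun t => f t - c) t‖ := by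
    intro t
    by_cases ht : t ∈ B <;> simp [hh, ht, -map_sub]
  have h2 : MemLp h 2 := hfc2.of_le hm.aestronglyMeasurable
    (Filter.Eventually.of_forall fun t => (hnorm t).le)
  have h1 : Integrable h := integrable_of_memLp_ball h2 hsupp
  have hfB : IntegrableOn f B := by
    have := integrable_of_memLp_ball (R := 1) (hf.memLp_ball 1)
      (fun x hx => Set.indicator_of_notMem hx _)
    exact (integrable_indicator_iff hBm).1 this
  have hi0 : ∫ x, h x = 0 := by
    rw [hh, integral_indicator hBm, integral_conj, integral_sub hfB
      (integrableOn_const measure_ball_lt_top.ne), setIntegral_const, hc, avgB]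
    rw [← hB, smul_smul, Measure.real, ← hV, mul_inv_cancel₀ hV0.ne']
    simp
  set X := ∫ t in B, ‖f t - c‖ ^ 2 with hX
  have hX0 : 0 ≤ X := integral_nonneg fun t => by positivity
  have hfh : ∫ t, f t * h t = (X : ℂ) := by
    have e : ∀ t, f t * h t = Set.indicator B (fun t => ((‖f t - c‖ ^ 2 : ℝ) : ℂ)) t + c * h t := by
      intro t
      by_cases ht : t ∈ B
      · simp only [hh, Set.indicator_of_mem ht]
        rw [← sub_eq_iff_eq_add, ← sub_mul, Complex.mul_conj, Complex.normSq_eq_norm_sq]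
      · simp [hh, ht]
    have i1 : Integrable (Set.indicator B (fun t => ((‖f t - c‖ ^ 2 : ℝ) : ℂ))) := by
      have := (integrable_fh hf h2 hsupp).sub (h1.const_mul c)
      refine this.congr (Filter.Eventually.of_forall fun t => ?_)
      simp only [Pi.sub_apply]
      rw [e t]; ring
    simp_rw [e]
    rw [integral_add i1 (h1.const_mul c), integral_const_mul, hi0, mul_zero, add_zero,
      integral_indicator hBm]
    exact integral_ofReal
  have hl2 : ∫⁻ x, ‖h x‖ₑ ^ 2 = ENNReal.ofReal X := by
    have i2 := (memLp_two_iff_integrable_sq_norm hm.aestronglyMeasurable).1 h2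
    have e : X = ∫ x, ‖h x‖ ^ 2 := by
      rw [hX, ← integral_indicator hBm]
      congr 1; ext t
      rw [hnorm]
      by_cases ht : t ∈ B <;> simp [ht]
    rw [e, ofReal_integral_eq_lintegral_ofReal i2
      (Filter.Eventually.of_forall fun x => by simp only [Pi.zero_apply]; positivity)]
    congr 1; ext x
    rw [ENNReal.ofReal_pow (norm_nonneg _), ofReal_norm]
  have hA := hcarl hf hN hyp
  have hBd := hdual h hm h2 hsupp hi0
  rw [hl2] at hBd
  have hD : ∀ n : ℕ, ‖(∫ t, f t * cnv d (dil d p' ((n : ℝ) + 1)⁻¹) h t) -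
      ∫ t, f t * cnv d (dil d p' ((n : ℝ) + 2)) h t‖ₑ ^ 2
      ≤ ENNReal.ofReal (C1 * N ^ 2) * (ENNReal.ofReal C2 * ENNReal.ofReal X) := by
    intro n
    have hn : (0 : ℝ) ≤ n := n.cast_nonneg
    have hδ : 0 < ((n : ℝ) + 1)⁻¹ := by positivity
    have hR : ((n : ℝ) + 1)⁻¹ ≤ (n : ℝ) + 2 := by
      have : ((n : ℝ) + 1)⁻¹ ≤ 1 := inv_le_one_of_one_le₀ (by linarith)
      linarith
    rw [← pair_split hp' hf hm h1 hsupp hδ (by linarith),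
      ← fubini_main Φ Ψ p Q hQ2 hδ hR (hphys hδ hR) hf hm h1 hsupp]
    exact pairing_bound Φ Ψ hf hm hδ hA hBd
  have hlim := (lim_small hp' (hp'0.trans hp0) hf hm h2 hsupp).sub
    (lim_large hp' hf hm h1 hsupp hi0)
  rw [sub_zero, hfh] at hlim
  have hlim2 := (ENNReal.continuous_pow 2).tendsto _ |>.comp hlim.enorm
  have hfin := le_of_tendsto' hlim2 hD
  rw [← ofReal_norm, Complex.norm_real, Real.norm_of_nonneg hX0, ← ENNReal.ofReal_pow hX0,
    ← ENNReal.ofReal_mul hC2.le, ← ENNReal.ofReal_mul (by positivity),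
    ENNReal.ofReal_le_ofReal_iff (by positivity)] at hfin
  rcases hX0.eq_or_lt with hz | hpos
  · rw [← hz]; positivity
  · nlinarith

theorem cov {d : ℕ} {F : Type*} [NormedAddCommGroup F] [NormedSpace ℝ F]
    (z : Ed d) {r : ℝ} (hr : 0 < r) (u : Ed d → F) :
    ∫ t, u (z + r • t) = (r ^ d)⁻¹ • ∫ t, u t := by
  have h := Measure.integral_comp_smul (volume : Measure (Ed d)) (fun x => u (z + x)) r
  rw [h, integral_add_left_eq_self u z, finrank_euclideanSpace_fin,
    abs_of_pos (by positivity)]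

theorem cov_ball {d : ℕ} {F : Type*} [NormedAddCommGroup F] [NormedSpace ℝ F]
    (z : Ed d) {r : ℝ} (hr : 0 < r) (ρ : ℝ) (u : Ed d → F) :
    ∫ t in Metric.ball (0 : Ed d) ρ, u (z + r • t) =
      (r ^ d)⁻¹ • ∫ t in Metric.ball z (r * ρ), u t := by
  rw [← integral_indicator measurableSet_ball, ← integral_indicator measurableSet_ball,
    ← cov z hr]
  congr 1
  ext t
  have : (z + r • t ∈ Metric.ball z (r * ρ)) ↔ t ∈ Metric.ball (0 : Ed d) ρ := by
    simp [norm_smul, abs_of_pos hr, hr]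
  by_cases ht : t ∈ Metric.ball (0 : Ed d) ρ
  · rw [Set.indicator_of_mem ht, Set.indicator_of_mem (this.2 ht)]
  · rw [Set.indicator_of_notMem ht, Set.indicator_of_notMem (fun h => ht (this.1 h))]

theorem vol_ball_scale {d : ℕ} (z : Ed d) {r : ℝ} (hr : 0 < r) (ρ : ℝ) :
    (volume (Metric.ball z (r * ρ))).toReal =
      r ^ d * (volume (Metric.ball (0 : Ed d) ρ)).toReal := by
  have h := cov_ball z hr ρ (fun _ => (1 : ℝ))
  simp only [integral_const, smul_eq_mul, mul_one, Measure.real, Measure.restrict_apply_univ] at h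
  rw [h]
  field_simp

theorem cnv_scale {d : ℕ} (g f : Ed d → ℂ) (z : Ed d) {r : ℝ} (hr : 0 < r) (ε : ℝ) (s : Ed d) :
    cnv d (dil d g ε) (fun t => f (z + r • t)) s = cnv d (dil d g (r * ε)) f (z + r • s) := by
  have h := cov z hr (fun t => dil d g (r * ε) (z + r • s - t) * f t)
  unfold cnv
  have h2 : ∫ t, dil d g (r * ε) (z + r • s - t) * f t =
      ((r : ℝ) ^ d) • ∫ t, dil d g (r * ε) (z + r • s - (z + r • t)) * f (z + r • t) := by
    rw [h, smul_smul, mul_inv_cancel₀ (by positivity), one_smul]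
  rw [h2, ← integral_smul]
  congr 1
  ext t
  have e : (r * ε)⁻¹ • (z + r • s - (z + r • t)) = ε⁻¹ • (s - t) := by
    rw [add_sub_add_left_eq_sub, ← smul_sub, smul_smul]
    congr 1
    rw [mul_inv]
    field_simp
  have hrc : (r : ℂ) ≠ 0 := by exact_mod_cast hr.ne'
  unfold dil
  rw [e, Complex.real_smul]
  push_cast
  rw [mul_pow, mul_inv]
  field_simp

theorem adm_scale {d : ℕ} {f : Ed d → ℂ} (hf : Adm f) (z : Ed d) {r : ℝ} (hr : 0 < r) :
    Adm (fun t => f (z + r • t)) := by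
  have hm : Measurable (fun t : Ed d => f (z + r • t)) :=
    hf.meas.comp (by fun_prop)
  refine ⟨hm, ?_⟩
  have h1 := (hf.int.comp_add_left z).comp_smul hr.ne'
  set c := 1 + ‖z‖ + r with hc
  refine (h1.const_mul (c ^ (d + 1))).mono'
    ((hm.norm.pow_const 2).div ((measurable_const.add measurable_norm).pow_const (d + 1))).aestronglyMeasurable
    (Filter.Eventually.of_forall fun t => ?_)
  rw [Real.norm_of_nonneg (by positivity)]
  have hk : 1 + ‖z + r • t‖ ≤ c * (1 + ‖t‖) := by
    have := norm_add_le z (r • t)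
    rw [norm_smul, Real.norm_of_nonneg hr.le] at this
    nlinarith [norm_nonneg t, norm_nonneg z, mul_nonneg (norm_nonneg z) (norm_nonneg t)]
  have hk2 : (1 + ‖z + r • t‖) ^ (d + 1) ≤ c ^ (d + 1) * (1 + ‖t‖) ^ (d + 1) := by
    rw [← mul_pow]; gcongr
  have hp : 0 < (1 + ‖z + r • t‖) ^ (d + 1) := by positivity
  have hp2 : 0 < (1 + ‖t‖) ^ (d + 1) := by positivity
  rw [mul_div_assoc', div_le_div_iff₀ hp2 hp]
  nlinarith [mul_le_mul_of_nonneg_left hk2 (sq_nonneg ‖f (z + r • t)‖)]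

theorem eps_scale (u : ℝ → ℝ) {r : ℝ} (hr : 0 < r) {ρ : ℝ} (hρ : 0 < ρ) :
    ∫ ε in Set.Ioc (0 : ℝ) ρ, u (r * ε) / ε = ∫ ε in Set.Ioc (0 : ℝ) (r * ρ), u ε / ε := by
  rw [← intervalIntegral.integral_of_le hρ.le, ← intervalIntegral.integral_of_le (by positivity)]
  have h := intervalIntegral.mul_integral_comp_mul_left (a := 0) (b := ρ) (f := fun ε => u ε / ε) r
  rw [mul_zero] at h
  rw [← h, ← intervalIntegral.integral_const_mul]
  congr 1
  ext ε
  field_simp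

/-- Scalar-valued converse direction of Theorem 3.2: if
`|Φ_ε*f(s)|² ds dε/ε` is a Carleson measure, then `f ∈ BMO` with square BMO
norm dominated by the Carleson norm. -/
theorem carleson_measure_gives_bmo
    (d : ℕ) (hd : 1 ≤ d) (Φ : SchwartzMap (Ed d) ℂ) (hΦ0 : ∫ s, Φ s = 0)
    (hΦnd : ∀ ξ : Ed d, ξ ≠ 0 → ∃ ε : ℝ, 0 < ε ∧ 𝓕 (fun s => Φ s) (ε • ξ) ≠ 0) :
    ∃ C : ℝ, 0 < C ∧
      ∀ (N : ℝ), 0 ≤ N → ∀ f : Ed d → ℂ, Measurable f →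
        Integrable (fun t : Ed d => ‖f t‖ ^ 2 / (1 + ‖t‖) ^ (d + 1)) volume →
        (∀ (z : Ed d) (r : ℝ), 0 < r →
          ∫ s in Metric.ball z r,
              ∫ ε in Set.Ioc (0 : ℝ) r, ‖cnv d (dil d (fun x => Φ x) ε) f s‖ ^ 2 / ε ≤
            N ^ 2 * (volume (Metric.ball z r)).toReal) →
        ∀ (z : Ed d) (r : ℝ), 0 < r →
          (volume (Metric.ball z r)).toReal⁻¹ *
            ∫ t in Metric.ball z r, ‖f t - avgB d f z r‖ ^ 2 ≤ C * N ^ 2 := by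
  obtain ⟨C, hC, H⟩ := unit_main Φ hΦ0 hΦnd
  have hV0 : 0 < (volume (Metric.ball (0 : Ed d) 1)).toReal :=
    ENNReal.toReal_pos (Metric.measure_ball_pos _ _ one_pos).ne' measure_ball_lt_top.ne
  refine ⟨C / (volume (Metric.ball (0 : Ed d) 1)).toReal, by positivity,
    fun N hN f hfm hfi hyp z r hr => ?_⟩
  have hv := vol_ball_scale z hr 1
  rw [mul_one] at hv
  have hrd : 0 < r ^ d := by positivity
  have hav : avgB d (fun t => f (z + r • t)) 0 1 = avgB d f z r := by
    unfold avgB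
    rw [cov_ball z hr 1 f, mul_one, hv, smul_smul, mul_inv]
    congr 1
    ring
  have key := H N hN (fun t => f (z + r • t)) (adm_scale ⟨hfm, hfi⟩ z hr) (by
    intro ρ hρ
    have e1 : ∀ s, ∫ ε in Set.Ioc (0:ℝ) ρ,
        ‖cnv d (dil d (fun x => Φ x) ε) (fun t => f (z + r • t)) s‖ ^ 2 / ε =
        (fun s' => ∫ ε in Set.Ioc (0:ℝ) (r * ρ),
          ‖cnv d (dil d (fun x => Φ x) ε) f s'‖ ^ 2 / ε) (z + r • s) := by
      intro s
      simp only [cnv_scale _ f z hr]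
      exact eps_scale (fun ε => ‖cnv d (dil d (fun x => Φ x) ε) f (z + r • s)‖ ^ 2) hr hρ
    simp_rw [e1]
    have h2 := cov_ball z hr ρ (fun s' => ∫ ε in Set.Ioc (0:ℝ) (r * ρ),
          ‖cnv d (dil d (fun x => Φ x) ε) f s'‖ ^ 2 / ε)
    rw [h2, smul_eq_mul, inv_mul_le_iff₀ hrd]
    have := hyp z (r * ρ) (by positivity)
    rw [vol_ball_scale z hr] at this
    linarith)
  rw [hav] at key
  have h3 := cov_ball z hr 1 (fun t => ‖f t - avgB d f z r‖ ^ 2)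
  rw [mul_one] at h3
  rw [h3, smul_eq_mul] at key
  rw [hv, mul_inv]
  calc _ = ((volume (Metric.ball (0 : Ed d) 1)).toReal)⁻¹ * ((r ^ d)⁻¹ *
      ∫ t in Metric.ball z r, ‖f t - avgB d f z r‖ ^ 2) := by ring
    _ ≤ ((volume (Metric.ball (0 : Ed d) 1)).toReal)⁻¹ * (C * N ^ 2) := by gcongr
    _ = _ := by ring
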